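/- arXiv:2402.11233 — 3 statements merged into one kernel-verified Lean document; each statement's English description precedes it below -/
import Mathlib

section
/- Fix n ∈ ℕ and ν ∈ ℂ, and let J ⊆ (0,∞) be an open interval on which D_{n,ν}(t) ≠ 0, so that the monic left and right orthogonal polynomials π_n(·;t) and π̃_n(·;t) exist for t ∈ J. Then the function t ↦ h_n(t) = ⟨π_n(·;t), π̃_n(·;t)⟩_t is differentiable on J and satisfies h_n'(t) = (1/2)·( ⟨z·π_n(z;t), π̃_n(·;t)⟩_t + ⟨π_n(·;t), z·π̃_n(z;t)⟩_t ) for all t ∈ J. -/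
/-! Write `h(s) = ⟨P_s, Q_s⟩_s`. Against a left orthogonal polynomial every monic polynomial of degree
`n` gives the same value, and symmetrically on the right. Hence `⟨P_s, Q_s⟩_s = ⟨P_s, Q_t⟩_s` and
`⟨P_t, Q_t⟩_t = ⟨P_s, Q_t⟩_t`, so
`h(s) - h(t) = ∑ p_j(s) q_k(t) (I_{k-j-ν}(s) - I_{k-j-ν}(t))`.
Only *continuity* of the coefficients `p_j(s)` is then needed to differentiate at `s = t`
(`hasDerivAt_mul_sub`); it follows from Cramer's rule, since the orthogonality relations form a
linear system whose determinant is `D_{n,ν}(s) ≠ 0` (`leftOP_coeff_continuousAt`). The derivative is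
`∑ p_j q_k I'_{k-j-ν}(t)`, and the Bessel identity `2 I'_μ = I_{μ-1} + I_{μ+1}`
(`besselI_hasDerivAt`) turns this into the two forms with one factor multiplied by `z`.

The Bessel identity comes from `I_μ(t) = (t/2)^μ F_μ((t/2)²)` with the entire function
`F_μ(x) = ∑ x^k / (k! Γ(k+μ+1))`, which satisfies `F_μ' = F_{μ+1}` and
`F_{μ-1}(x) = μ F_μ(x) + x F_{μ+1}(x)`.
-/


/-- The modified Bessel function of the first kind `I_μ(t)`, for complex order `μ`
and real argument `t`, defined by its convergent power series, with
`(t/2)^μ := exp(μ · log(t/2))` using the real logarithm. -/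
noncomputable def besselI (μ : ℂ) (t : ℝ) : ℂ :=
  ∑' k : ℕ, Complex.exp ((2 * (k : ℂ) + μ) * (Real.log (t / 2) : ℂ)) /
    ((k.factorial : ℂ) * Complex.Gamma ((k : ℂ) + μ + 1))

/-- The Toeplitz determinant `D_{n,ν}(t) = det( I_{i-j-ν}(t) )_{i,j=0}^{n-1}`
(with `D_{0,ν}(t) = 1`). -/
noncomputable def toeplitzD (n : ℕ) (ν : ℂ) (t : ℝ) : ℂ :=
  Matrix.det (Matrix.of fun i j : Fin n => besselI (((i : ℕ) : ℂ) - ((j : ℕ) : ℂ) - ν) t)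

/-- The shifted Toeplitz determinant `D'¹_{n,ν}(t) = det( I_{i-j-1-ν}(t) )_{i,j=0}^{n-1}`
(with `D'¹_{0,ν}(t) = 1`). -/
noncomputable def toeplitzD1 (n : ℕ) (ν : ℂ) (t : ℝ) : ℂ :=
  Matrix.det (Matrix.of fun i j : Fin n => besselI (((i : ℕ) : ℂ) - ((j : ℕ) : ℂ) - 1 - ν) t)

/-- The bilinear form `⟨p,q⟩_t = Σ_{j,k} p_j q_k I_{k-j-ν}(t)` on polynomials, induced by the
weight `w(s) = e^{(t/2)(s+1/s)} s^ν` on the Hankel loop. -/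
noncomputable def besselForm (ν : ℂ) (t : ℝ) (p q : Polynomial ℂ) : ℂ :=
  ∑ j ∈ p.support, ∑ k ∈ q.support,
    p.coeff j * q.coeff k * besselI (((k : ℕ) : ℂ) - ((j : ℕ) : ℂ) - ν) t

/-- `p` is the `n`-th monic left orthogonal polynomial: `p` is monic of degree `n` and
`⟨p, z^m⟩_t = 0` for `m = 0, …, n-1`. -/
def IsLeftOP (ν : ℂ) (t : ℝ) (n : ℕ) (p : Polynomial ℂ) : Prop :=
  p.Monic ∧ p.natDegree = n ∧ ∀ m < n, besselForm ν t p (Polynomial.X ^ m) = 0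

/-- `q` is the `n`-th monic right orthogonal polynomial: `q` is monic of degree `n` and
`⟨z^m, q⟩_t = 0` for `m = 0, …, n-1`. -/
def IsRightOP (ν : ℂ) (t : ℝ) (n : ℕ) (q : Polynomial ℂ) : Prop :=
  q.Monic ∧ q.natDegree = n ∧ ∀ m < n, besselForm ν t (Polynomial.X ^ m) q = 0

/-! ### The entire function `F_μ` -/

/-- The `k`-th term of the entire function `F_μ(x) = ∑ x^k / (k! Γ(k+μ+1))`. At the poles of
`Γ` the value `0` of `Complex.Gamma` makes `Γ⁻¹ = 0`, as it should be. -/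
noncomputable def besselTerm (μ : ℂ) (k : ℕ) (x : ℂ) : ℂ :=
  x ^ k * ((k.factorial : ℂ)⁻¹ * (Complex.Gamma ((k : ℂ) + μ + 1))⁻¹)

/-- The entire function `F_μ(x) = ∑ x^k / (k! Γ(k+μ+1))`, for which
`I_μ(t) = (t/2)^μ F_μ((t/2)²)`. -/
noncomputable def besselF (μ : ℂ) (x : ℂ) : ℂ := ∑' k : ℕ, besselTerm μ k x

/-- `1/Γ(s) = s/Γ(s+1)` holds at every `s`, including the poles of `Γ`. -/
lemma inv_Gamma_shift (s : ℂ) : (Complex.Gamma s)⁻¹ = s * (Complex.Gamma (s + 1))⁻¹ := by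
  simpa using Complex.one_div_Gamma_eq_self_mul_one_div_Gamma_add_one s

/-- Boundedness holds because `|1/Γ(k+μ+1)|` is nonincreasing in `k` once `|k+μ+1| ≥ 1`. -/
lemma inv_Gamma_bounded (μ : ℂ) :
    ∃ C : ℝ, ∀ k : ℕ, ‖(Complex.Gamma ((k : ℂ) + μ + 1))⁻¹‖ ≤ C := by
  set g : ℕ → ℝ := fun k => ‖(Complex.Gamma ((k : ℂ) + μ + 1))⁻¹‖ with hg
  obtain ⟨N, hN⟩ := exists_nat_ge (‖μ + 1‖ + 1)
  have hstep : ∀ k, N ≤ k → g (k + 1) ≤ g k := by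
    intro k hk
    have h1 : (1 : ℝ) ≤ ‖(k : ℂ) + μ + 1‖ := by
      have h2 : ‖(k : ℂ)‖ ≤ ‖(k : ℂ) + μ + 1‖ + ‖μ + 1‖ := by
        have := norm_sub_le ((k : ℂ) + μ + 1) (μ + 1)
        rwa [show (k : ℂ) + μ + 1 - (μ + 1) = k by ring] at this
      rw [Complex.norm_natCast] at h2
      have : (N : ℝ) ≤ k := by exact_mod_cast hk
      linarith
    have h3 : g k = ‖(k : ℂ) + μ + 1‖ * g (k + 1) := by
      simp only [hg]
      rw [inv_Gamma_shift, norm_mul]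
      congr 4
      push_cast
      ring
    rw [h3]
    exact le_mul_of_one_le_left (norm_nonneg _) h1
  refine ⟨∑ i ∈ Finset.range (N + 1), g i, fun k => ?_⟩
  have hle : ∀ i, i ≤ N → g i ≤ ∑ i ∈ Finset.range (N + 1), g i := fun i hi =>
    Finset.single_le_sum (f := g) (fun _ _ => norm_nonneg _) (Finset.mem_range.2 (by omega))
  rcases le_total k N with h | h
  · exact hle k h
  · exact Nat.le_induction (hle N le_rfl) (fun m hm ih => (hstep m hm).trans ih) k h

lemma besselTerm_bound (μ : ℂ) : ∃ C : ℝ, ∀ (R : ℝ) (k : ℕ) (x : ℂ), ‖x‖ ≤ R →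
    ‖besselTerm μ k x‖ ≤ C * (R ^ k / k.factorial) := by
  obtain ⟨C, hC⟩ := inv_Gamma_bounded μ
  refine ⟨C, fun R k x hx => ?_⟩
  have hR : 0 ≤ R := (norm_nonneg x).trans hx
  rw [besselTerm, norm_mul, norm_mul, norm_pow, norm_inv, Complex.norm_natCast]
  calc ‖x‖ ^ k * (((k.factorial : ℝ))⁻¹ * ‖(Complex.Gamma ((k : ℂ) + μ + 1))⁻¹‖)
      ≤ R ^ k * (((k.factorial : ℝ))⁻¹ * C) := by
        gcongr
        exact hC k
    _ = C * (R ^ k / k.factorial) := by ring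

lemma besselTerm_summable (μ x : ℂ) : Summable fun k => besselTerm μ k x := by
  obtain ⟨C, hC⟩ := besselTerm_bound μ
  exact Summable.of_norm_bounded ((Real.summable_pow_div_factorial ‖x‖).mul_left C)
    fun k => hC _ k x le_rfl

lemma besselTerm_hasDerivAt_succ (μ x : ℂ) (k : ℕ) :
    HasDerivAt (besselTerm μ (k + 1)) (besselTerm (μ + 1) k x) x := by
  have h := (hasDerivAt_pow (k + 1) x).mul_const
    (((k + 1).factorial : ℂ)⁻¹ * (Complex.Gamma (((k + 1 : ℕ) : ℂ) + μ + 1))⁻¹)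
  refine h.congr_deriv ?_
  have hk : ((k : ℂ) + 1) ≠ 0 := Nat.cast_add_one_ne_zero k
  have hf : (k.factorial : ℂ) ≠ 0 := by exact_mod_cast k.factorial_ne_zero
  rw [besselTerm, Nat.factorial_succ,
    show (((k + 1 : ℕ) : ℂ) + μ + 1) = (k : ℂ) + (μ + 1) + 1 by push_cast; ring]
  push_cast
  rw [mul_inv]
  field_simp

lemma besselTerm_zero (μ x : ℂ) : besselTerm μ 0 x = besselTerm μ 0 0 := by
  simp [besselTerm]

/-- `F_μ' = F_{μ+1}`, by termwise differentiation. -/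
lemma besselF_hasDerivAt (μ x : ℂ) : HasDerivAt (besselF μ) (besselF (μ + 1) x) x := by
  obtain ⟨C, hC⟩ := besselTerm_bound μ
  set R : ℝ := ‖x‖ + 1 with hR
  have hu := (Real.summable_pow_div_factorial R).mul_left C
  have hx : x ∈ Metric.ball (0 : ℂ) R := by simp [hR]
  have hd : ∀ k, DifferentiableOn ℂ (besselTerm μ k) (Metric.ball (0 : ℂ) R) := fun k => by
    unfold besselTerm
    fun_prop
  have hb : ∀ (k : ℕ) (w : ℂ), w ∈ Metric.ball (0 : ℂ) R →
      ‖besselTerm μ k w‖ ≤ C * (R ^ k / k.factorial) := fun k w hw =>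
    hC R k w (by simpa using (mem_ball_zero_iff.1 hw).le)
  have h1 := Complex.hasSum_deriv_of_summable_norm hu hd Metric.isOpen_ball hb hx
  have h2 := (Complex.differentiableOn_tsum_of_summable_norm hu hd Metric.isOpen_ball hb
    x hx).differentiableAt (Metric.isOpen_ball.mem_nhds hx)
  have h3 : HasSum (fun k => deriv (besselTerm μ (k + 1)) x)
      (deriv (fun w => ∑' k, besselTerm μ k w) x) := by
    have h0 : deriv (besselTerm μ 0) x = 0 := by
      rw [show besselTerm μ 0 = fun _ => besselTerm μ 0 0 from funext (besselTerm_zero μ)]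
      simp
    simpa [h0] using (hasSum_nat_add_iff' 1).2 h1
  have h4 : besselF (μ + 1) x = deriv (fun w => ∑' k, besselTerm μ k w) x := by
    rw [← h3.tsum_eq, besselF]
    exact tsum_congr fun k => (besselTerm_hasDerivAt_succ μ x k).deriv.symm
  rw [h4]
  exact h2.hasDerivAt

/-- The three-term relation comes from `1/Γ(k+μ) = (k+μ)/Γ(k+μ+1)`: the summand with factor `k`
is `x` times the derivative of `F_μ`. -/
lemma besselF_recurrence (μ x : ℂ) :
    besselF (μ - 1) x = μ * besselF μ x + x * besselF (μ + 1) x := by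
  have hs := besselTerm_summable μ x
  have hs0 := besselTerm_summable (μ - 1) x
  have key : ∀ k : ℕ, besselTerm (μ - 1) k x = μ * besselTerm μ k x + k * besselTerm μ k x := by
    intro k
    simp only [besselTerm]
    rw [show (k : ℂ) + (μ - 1) + 1 = k + μ by ring, inv_Gamma_shift]
    ring
  have key2 : ∀ k : ℕ,
      ((k + 1 : ℕ) : ℂ) * besselTerm μ (k + 1) x = x * besselTerm (μ + 1) k x := by
    intro k
    have hk : ((k : ℂ) + 1) ≠ 0 := Nat.cast_add_one_ne_zero k
    simp only [besselTerm, Nat.factorial_succ]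
    rw [show (((k + 1 : ℕ) : ℂ) + μ + 1) = (k : ℂ) + (μ + 1) + 1 by push_cast; ring]
    push_cast
    rw [mul_inv]
    field_simp
    ring
  have hk : Summable fun k : ℕ => (k : ℂ) * besselTerm μ k x := by
    have := hs0.sub (hs.mul_left μ)
    refine this.congr fun k => ?_
    rw [key]
    ring
  calc besselF (μ - 1) x = ∑' k : ℕ, (μ * besselTerm μ k x + k * besselTerm μ k x) :=
        tsum_congr key
    _ = μ * besselF μ x + ∑' k : ℕ, (k : ℂ) * besselTerm μ k x := by
        rw [(hs.mul_left μ).tsum_add hk, tsum_mul_left, besselF]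
    _ = μ * besselF μ x + x * besselF (μ + 1) x := by
        rw [hk.tsum_eq_zero_add, tsum_congr key2, tsum_mul_left]
        simp [besselF]

/-! ### The derivative of the Bessel function -/

lemma besselI_eq (μ : ℂ) (t : ℝ) : besselI μ t =
    Complex.exp (μ * (Real.log (t / 2) : ℂ)) *
      besselF μ (Complex.exp (Real.log (t / 2) : ℂ) ^ 2) := by
  rw [besselI, besselF, ← tsum_mul_left]
  refine tsum_congr fun k => ?_
  have h : (2 * (k : ℂ) + μ) * (Real.log (t / 2) : ℂ) =
      μ * (Real.log (t / 2) : ℂ) + ((2 * k : ℕ) : ℂ) * (Real.log (t / 2) : ℂ) := by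
    push_cast
    ring
  rw [besselTerm, ← pow_mul, ← Complex.exp_nat_mul, h, Complex.exp_add, div_eq_mul_inv, mul_inv,
    mul_assoc]

/-- The differentiation formula `I_μ' = (I_{μ-1} + I_{μ+1}) / 2`. -/
lemma besselI_hasDerivAt (μ : ℂ) (t : ℝ) (ht : 0 < t) :
    HasDerivAt (besselI μ) ((1 / 2) * (besselI (μ - 1) t + besselI (μ + 1) t)) t := by
  have hL : HasDerivAt (fun s : ℝ => ((Real.log (s / 2) : ℝ) : ℂ)) ((t⁻¹ : ℝ) : ℂ) t := by
    have h : HasDerivAt (fun s : ℝ => Real.log (s / 2)) (t⁻¹) t := by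
      have := ((hasDerivAt_id t).div_const 2).log (by simp; exact ht.ne')
      refine this.congr_deriv ?_
      simp only [id]
      field_simp
    exact h.ofReal_comp
  have hE : HasDerivAt
      (fun s : ℝ => Complex.exp (μ * (Real.log (s / 2) : ℂ)) *
        besselF μ (Complex.exp (Real.log (s / 2) : ℂ) ^ 2)) _ t :=
    (hL.const_mul μ).cexp.mul
      (HasDerivAt.comp (𝕜 := ℝ) (𝕜' := ℂ) t (besselF_hasDerivAt μ _) (hL.cexp.pow 2))
  rw [show besselI μ = _ from funext (besselI_eq μ)]
  refine hE.congr_deriv ?_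
  have hexp : Complex.exp (Real.log (t / 2) : ℂ) = (t : ℂ) / 2 := by
    rw [← Complex.ofReal_exp, Real.exp_log (by positivity)]
    push_cast
    rfl
  have htc : (t : ℂ) ≠ 0 := by exact_mod_cast ht.ne'
  simp only [besselI_eq, sub_mul, add_mul, one_mul, Complex.exp_sub, Complex.exp_add, hexp]
  rw [besselF_recurrence]
  push_cast
  field_simp
  ring

/-! ### The bilinear form in coefficients -/

lemma besselForm_eq_range (ν : ℂ) (t : ℝ) (p q : Polynomial ℂ) (N M : ℕ)
    (hp : p.natDegree < N) (hq : q.natDegree < M) :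
    besselForm ν t p q = ∑ j ∈ Finset.range N, ∑ k ∈ Finset.range M,
      p.coeff j * q.coeff k * besselI ((k : ℂ) - (j : ℂ) - ν) t := by
  have hsub : ∀ (r : Polynomial ℂ) (K : ℕ), r.natDegree < K → r.support ⊆ Finset.range K :=
    fun r K h i hi => Finset.mem_range.2 ((Polynomial.le_natDegree_of_mem_supp i hi).trans_lt h)
  rw [besselForm, Finset.sum_subset (hsub p N hp)]
  · refine Finset.sum_congr rfl fun j _ => Finset.sum_subset (hsub q M hq) fun k _ hk => ?_
    simp [Polynomial.notMem_support_iff.1 hk]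
  · intro j _ hj
    simp [Polynomial.notMem_support_iff.1 hj]

lemma besselForm_X_pow_right (ν : ℂ) (t : ℝ) (p : Polynomial ℂ) (N m : ℕ)
    (hp : p.natDegree < N) : besselForm ν t p (Polynomial.X ^ m) =
      ∑ j ∈ Finset.range N, p.coeff j * besselI ((m : ℂ) - (j : ℂ) - ν) t := by
  rw [besselForm_eq_range ν t p _ N (m + 1) hp (by simp)]
  refine Finset.sum_congr rfl fun j _ => ?_
  rw [Finset.sum_eq_single m] <;> simp +contextual [Polynomial.coeff_X_pow]

lemma besselForm_X_pow_left (ν : ℂ) (t : ℝ) (q : Polynomial ℂ) (M m : ℕ)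
    (hq : q.natDegree < M) : besselForm ν t (Polynomial.X ^ m) q =
      ∑ k ∈ Finset.range M, q.coeff k * besselI ((k : ℂ) - (m : ℂ) - ν) t := by
  rw [besselForm_eq_range ν t _ q (m + 1) M (by simp) hq, Finset.sum_comm]
  refine Finset.sum_congr rfl fun j _ => ?_
  rw [Finset.sum_eq_single m] <;> simp +contextual [Polynomial.coeff_X_pow]

/-! ### Pairings with orthogonal polynomials -/

/-- Pairing a left orthogonal polynomial with a monic polynomial of degree `n` sees only the
leading term. -/
lemma leftOP_form (ν : ℂ) (t : ℝ) (n : ℕ) (p q : Polynomial ℂ) (hp : IsLeftOP ν t n p)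
    (hq : q.Monic) (hqn : q.natDegree = n) :
    besselForm ν t p q = besselForm ν t p (Polynomial.X ^ n) := by
  have h : besselForm ν t p q =
      ∑ k ∈ Finset.range (n + 1), q.coeff k * besselForm ν t p (Polynomial.X ^ k) := by
    rw [besselForm_eq_range ν t p q (n + 1) (n + 1) (by simp [hp.2.1]) (by simp [hqn]),
      Finset.sum_comm]
    refine Finset.sum_congr rfl fun k _ => ?_
    rw [besselForm_X_pow_right ν t p (n + 1) k (by simp [hp.2.1]), Finset.mul_sum]
    exact Finset.sum_congr rfl fun j _ => by ring
  have hlead : q.coeff n = 1 := by rw [← hqn]; exact hq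
  rw [h, Finset.sum_range_succ, Finset.sum_eq_zero, hlead]
  · ring
  · intro k hk
    rw [hp.2.2 k (Finset.mem_range.1 hk), mul_zero]

/-- Pairing a monic polynomial of degree `n` with a right orthogonal polynomial sees only the
leading term. -/
lemma rightOP_form (ν : ℂ) (t : ℝ) (n : ℕ) (p q : Polynomial ℂ) (hq : IsRightOP ν t n q)
    (hp : p.Monic) (hpn : p.natDegree = n) :
    besselForm ν t p q = besselForm ν t (Polynomial.X ^ n) q := by
  have h : besselForm ν t p q =
      ∑ j ∈ Finset.range (n + 1), p.coeff j * besselForm ν t (Polynomial.X ^ j) q := by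
    rw [besselForm_eq_range ν t p q (n + 1) (n + 1) (by simp [hpn]) (by simp [hq.2.1])]
    refine Finset.sum_congr rfl fun j _ => ?_
    rw [besselForm_X_pow_left ν t q (n + 1) j (by simp [hq.2.1]), Finset.mul_sum]
    exact Finset.sum_congr rfl fun k _ => by ring
  have hlead : p.coeff n = 1 := by rw [← hpn]; exact hp
  rw [h, Finset.sum_range_succ, Finset.sum_eq_zero, hlead]
  · ring
  · intro k hk
    rw [hq.2.2 k (Finset.mem_range.1 hk), mul_zero]

/-! ### Multiplication by `z` -/

lemma besselForm_X_mul_left (ν : ℂ) (t : ℝ) (p q : Polynomial ℂ) (N : ℕ)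
    (hp : p.natDegree < N) (hq : q.natDegree < N) :
    besselForm ν t (Polynomial.X * p) q = ∑ j ∈ Finset.range N, ∑ k ∈ Finset.range N,
      p.coeff j * q.coeff k * besselI ((k : ℂ) - (j : ℂ) - ν - 1) t := by
  have hX : (Polynomial.X * p).natDegree < N + 1 := by
    have := Polynomial.natDegree_mul_le (p := (Polynomial.X : Polynomial ℂ)) (q := p)
    rw [Polynomial.natDegree_X] at this
    omega
  rw [besselForm_eq_range ν t _ q (N + 1) N hX hq, Finset.sum_range_succ']
  simp only [Polynomial.coeff_X_mul, Polynomial.coeff_X_mul_zero, zero_mul, Finset.sum_const_zero,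
    add_zero]
  refine Finset.sum_congr rfl fun j _ => Finset.sum_congr rfl fun k _ => ?_
  congr 2
  push_cast
  ring

lemma besselForm_X_mul_right (ν : ℂ) (t : ℝ) (p q : Polynomial ℂ) (N : ℕ)
    (hp : p.natDegree < N) (hq : q.natDegree < N) :
    besselForm ν t p (Polynomial.X * q) = ∑ j ∈ Finset.range N, ∑ k ∈ Finset.range N,
      p.coeff j * q.coeff k * besselI ((k : ℂ) - (j : ℂ) - ν + 1) t := by
  have hX : (Polynomial.X * q).natDegree < N + 1 := by
    have := Polynomial.natDegree_mul_le (p := (Polynomial.X : Polynomial ℂ)) (q := q)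
    rw [Polynomial.natDegree_X] at this
    omega
  rw [besselForm_eq_range ν t p _ N (N + 1) hp hX]
  refine Finset.sum_congr rfl fun j _ => ?_
  rw [Finset.sum_range_succ']
  simp only [Polynomial.coeff_X_mul, Polynomial.coeff_X_mul_zero, mul_zero, zero_mul, add_zero]
  refine Finset.sum_congr rfl fun k _ => ?_
  congr 2
  push_cast
  ring

/-! ### Continuity of the coefficients -/

/-- The Toeplitz matrix whose determinant is `toeplitzD n ν t`. -/
noncomputable def toeplitzMat (n : ℕ) (ν : ℂ) (t : ℝ) : Matrix (Fin n) (Fin n) ℂ :=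
  Matrix.of fun i j : Fin n => besselI (((i : ℕ) : ℂ) - ((j : ℕ) : ℂ) - ν) t

/-- Cramer's rule for the nonleading coefficients of a left orthogonal polynomial. -/
lemma leftOP_cramer (n : ℕ) (ν : ℂ) (t : ℝ) (hD : toeplitzD n ν t ≠ 0) (p : Polynomial ℂ)
    (hp : IsLeftOP ν t n p) (j : Fin n) : p.coeff j = (toeplitzMat n ν t).det⁻¹ *
      ((toeplitzMat n ν t).adjugate.mulVec
        fun i : Fin n => -besselI (((i : ℕ) : ℂ) - (n : ℂ) - ν) t) j := by
  have hD' : (toeplitzMat n ν t).det ≠ 0 := hD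
  have hlead : p.coeff n = 1 := by rw [← hp.2.1]; exact hp.1
  have hsys : (toeplitzMat n ν t).mulVec (fun i : Fin n => p.coeff i) =
      fun i : Fin n => -besselI (((i : ℕ) : ℂ) - (n : ℂ) - ν) t := by
    funext m
    have h := hp.2.2 m m.2
    rw [besselForm_X_pow_right ν t p (n + 1) m (by simp [hp.2.1]), Finset.sum_range_succ, hlead,
      one_mul, ← Fin.sum_univ_eq_sum_range
        (fun j => p.coeff j * besselI (((m : ℕ) : ℂ) - (j : ℂ) - ν) t)] at h
    rw [← eq_neg_of_add_eq_zero_left h]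
    simp only [Matrix.mulVec, dotProduct, toeplitzMat, Matrix.of_apply]
    exact Finset.sum_congr rfl fun i _ => mul_comm _ _
  rw [← hsys, Matrix.mulVec_mulVec, Matrix.adjugate_mul, Matrix.smul_mulVec, Matrix.one_mulVec,
    Pi.smul_apply, smul_eq_mul, inv_mul_cancel_left₀ hD']

lemma leftOP_coeff_continuousAt (n : ℕ) (ν : ℂ) (J : Set ℝ) (hJopen : IsOpen J)
    (hJpos : J ⊆ Set.Ioi (0 : ℝ)) (hne : ∀ t ∈ J, toeplitzD n ν t ≠ 0) (P : ℝ → Polynomial ℂ)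
    (hP : ∀ t ∈ J, IsLeftOP ν t n (P t)) (t : ℝ) (ht : t ∈ J) (j : ℕ) (hj : j < n + 1) :
    ContinuousAt (fun s => (P s).coeff j) t := by
  have hJ : J ∈ nhds t := hJopen.mem_nhds ht
  rcases Nat.lt_succ_iff_lt_or_eq.1 hj with hj | rfl
  · have hI : ∀ μ, ContinuousAt (besselI μ) t := fun μ =>
      (besselI_hasDerivAt μ t (hJpos ht)).continuousAt
    have hM : ContinuousAt (toeplitzMat n ν) t :=
      continuousAt_pi.2 fun a => continuousAt_pi.2 fun b => hI _
    have hdet : ContinuousAt (fun s => (toeplitzMat n ν s).det) t :=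
      (continuous_id.matrix_det.continuousAt (x := toeplitzMat n ν t)).comp hM
    have hadj : ContinuousAt (fun s => (toeplitzMat n ν s).adjugate) t :=
      (continuous_id.matrix_adjugate.continuousAt (x := toeplitzMat n ν t)).comp hM
    have hent : ∀ a b, ContinuousAt (fun s => (toeplitzMat n ν s).adjugate a b) t := fun a b =>
      continuousAt_pi.1 (continuousAt_pi.1 hadj a) b
    have hc : ContinuousAt (fun s => (toeplitzMat n ν s).det⁻¹ *
        ((toeplitzMat n ν s).adjugate.mulVec
          fun i : Fin n => -besselI (((i : ℕ) : ℂ) - (n : ℂ) - ν) s) ⟨j, hj⟩) t := by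
      refine (hdet.inv₀ (hne t ht)).mul ?_
      simp only [Matrix.mulVec, dotProduct]
      exact tendsto_finsetSum _ fun i _ => (hent _ i).mul (hI _).neg
    refine hc.congr ?_
    filter_upwards [hJ] with s hs
    exact (leftOP_cramer n ν s (hne s hs) (P s) (hP s hs) ⟨j, hj⟩).symm
  · refine (continuousAt_const (y := (1 : ℂ))).congr ?_
    filter_upwards [hJ] with s hs
    have h : (P s).coeff (P s).natDegree = 1 := (hP s hs).1
    rw [(hP s hs).2.1] at h
    exact h.symm

/-! ### The derivative of the norming constant -/

/-- Since the second factor vanishes at `t`, the first one need only be continuous there. -/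
lemma hasDerivAt_mul_sub (a g : ℝ → ℂ) (g' : ℂ) (t : ℝ) (ha : ContinuousAt a t)
    (hg : HasDerivAt g g' t) : HasDerivAt (fun s => a s * (g s - g t)) (a t * g') t := by
  rw [hasDerivAt_iff_tendsto_slope] at hg ⊢
  refine ((ha.tendsto.mono_left nhdsWithin_le_nhds).mul hg).congr fun s => ?_
  simp only [slope_def_module, sub_self, mul_zero, sub_zero, mul_smul_comm]

/-- the norming constant `h_n(t) = ⟨π_n(·;t), π̃_n(·;t)⟩_t` is differentiable
in `t` on `J` with `h_n'(t) = (1/2)(⟨z·π_n, π̃_n⟩_t + ⟨π_n, z·π̃_n⟩_t)`. -/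
theorem norming_constant_deriv (n : ℕ) (ν : ℂ) (J : Set ℝ)
    (hJopen : IsOpen J) (hJconn : J.OrdConnected) (hJpos : J ⊆ Set.Ioi (0 : ℝ))
    (hne : ∀ t ∈ J, toeplitzD n ν t ≠ 0)
    (P Q : ℝ → Polynomial ℂ)
    (hP : ∀ t ∈ J, IsLeftOP ν t n (P t)) (hQ : ∀ t ∈ J, IsRightOP ν t n (Q t)) :
    ∀ t ∈ J, HasDerivAt (fun s => besselForm ν s (P s) (Q s))
      ((1 / 2) * (besselForm ν t (Polynomial.X * P t) (Q t) +
        besselForm ν t (P t) (Polynomial.X * Q t))) t := by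
  intro t ht
  have hdP : ∀ s ∈ J, (P s).natDegree < n + 1 := fun s hs => by simp [(hP s hs).2.1]
  have hdQ : ∀ s ∈ J, (Q s).natDegree < n + 1 := fun s hs => by simp [(hQ s hs).2.1]
  -- The sum over `j, k` below is `h(s) - h(t)` for `s ∈ J`, by `e1` and `e2`.
  have hsum := HasDerivAt.fun_sum (u := Finset.range (n + 1)) fun j hj =>
    HasDerivAt.fun_sum (u := Finset.range (n + 1)) fun k _ =>
      hasDerivAt_mul_sub (fun s => (P s).coeff j * (Q t).coeff k) _ _ t
        ((leftOP_coeff_continuousAt n ν J hJopen hJpos hne P hP t ht j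
          (Finset.mem_range.1 hj)).mul continuousAt_const)
        (besselI_hasDerivAt ((k : ℂ) - (j : ℂ) - ν) t (hJpos ht))
  have hmain := hsum.const_add (besselForm ν t (P t) (Q t))
  refine (hmain.congr_of_eventuallyEq ?_).congr_deriv ?_
  · filter_upwards [hJopen.mem_nhds ht] with s hs
    have e1 : besselForm ν s (P s) (Q s) = besselForm ν s (P s) (Q t) :=
      (leftOP_form ν s n _ _ (hP s hs) (hQ s hs).1 (hQ s hs).2.1).trans
        (leftOP_form ν s n _ _ (hP s hs) (hQ t ht).1 (hQ t ht).2.1).symm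
    have e2 : besselForm ν t (P t) (Q t) = besselForm ν t (P s) (Q t) :=
      (rightOP_form ν t n _ _ (hQ t ht) (hP t ht).1 (hP t ht).2.1).trans
        (rightOP_form ν t n _ _ (hQ t ht) (hP s hs).1 (hP s hs).2.1).symm
    rw [e1, e2, besselForm_eq_range ν s _ _ _ _ (hdP s hs) (hdQ t ht),
      besselForm_eq_range ν t _ _ _ _ (hdP s hs) (hdQ t ht)]
    simp only [mul_sub, Finset.sum_sub_distrib]
    ring
  · rw [besselForm_X_mul_left ν t _ _ _ (hdP t ht) (hdQ t ht),
      besselForm_X_mul_right ν t _ _ _ (hdP t ht) (hdQ t ht), ← Finset.sum_add_distrib,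
      Finset.mul_sum]
    refine Finset.sum_congr rfl fun j _ => ?_
    rw [← Finset.sum_add_distrib, Finset.mul_sum]
    exact Finset.sum_congr rfl fun k _ => by ring
end

section
/- Define φ₀(z) = (1/2)(z − 1/z) + Log z − πi for Im z > 0 and φ₀(z) = (1/2)(z − 1/z) + Log z + πi for Im z < 0, where Log is the principal logarithm. Then: (i) the two formulas agree across the negative real axis, so φ₀ extends to an analytic function on ℂ∖[0,∞); (ii) φ₀(−1) = φ₀'(−1) = φ₀''(−1) = 0 and φ₀'''(−1) = 1; and (iii) there exist δ > 0 and an injective analytic function f on the disk { z : |z+1| < δ } such that f(z)³ = (3/2)·φ₀(z) for all z in the disk, f(−1) = 0, and f'(−1) = 2^{−2/3}. In particular f(z) = 2^{−2/3}(z+1)·(1 + o(1)) as z → −1, so f is a conformal mapping at z = −1. -/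
/-!
The proof rests on the single formula `φ z = (z - 1 / z) / 2 + log (-z)`. As `-z` lies in the slit
plane exactly when `z` is off `[0, ∞)`, this is analytic there, and the identities
`log (-z) = log z ∓ π i` for `± Im z > 0` recover the two half-plane formulas.

The first two derivatives of `φ` are `(1 + 1 / z) ^ 2 / 2` and `-(z + 1) / z ^ 3`, and the third
equals `1` at `-1`. So `φ` vanishes to third order there, and `φ z = (z + 1) ^ 3 * g z` with `g`
analytic at `-1` and `g (-1) = 1 / 6` (`exists_cubic_factor`). Then `(3 / 2) * g` equals `1 / 4` at
`-1`, so it has an analytic cube root there, and `f z = (z + 1) * exp (log ((3 / 2) * g z) / 3)` is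
the required function. Its derivative at `-1` is `exp (log (1 / 4) / 3) = 2 ^ (-2 / 3) ≠ 0`, so the
inverse function theorem gives injectivity near `-1` (`exists_cube_root`).
-/

open scoped Real

/-- The function `φ₀`, written with `log (-z)` so that the branch cut falls on `[0, ∞)`. -/
noncomputable def phi0 (z : ℂ) : ℂ := (1 / 2) * (z - 1 / z) + Complex.log (-z)

lemma neg_mem_slitPlane_iff (z : ℂ) : -z ∈ Complex.slitPlane ↔ ¬(0 ≤ z.re ∧ z.im = 0) := by
  simp only [Complex.mem_slitPlane_iff, Complex.neg_re, Complex.neg_im, ne_eq, neg_eq_zero]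
  rw [not_and_or, not_le, neg_pos]

lemma ne_zero_of_neg_mem_slitPlane {z : ℂ} (hz : -z ∈ Complex.slitPlane) : z ≠ 0 :=
  neg_ne_zero.mp (Complex.slitPlane_ne_zero hz)

lemma neg_one_mem : -(-1 : ℂ) ∈ Complex.slitPlane := by simp

lemma eventually_neg_mem_slitPlane {z : ℂ} (hz : -z ∈ Complex.slitPlane) :
    ∀ᶠ w in nhds z, -w ∈ Complex.slitPlane :=
  continuous_neg.continuousAt.eventually (Complex.isOpen_slitPlane.mem_nhds hz)

lemma phi0_analyticAt {z : ℂ} (hz : -z ∈ Complex.slitPlane) : AnalyticAt ℂ phi0 z := by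
  have h0 := ne_zero_of_neg_mem_slitPlane hz
  unfold phi0
  exact (analyticAt_const.mul (analyticAt_id.sub (analyticAt_const.div analyticAt_id h0))).add
    (analyticAt_id.neg.clog hz)

lemma phi0_hasDerivAt {z : ℂ} (hz : -z ∈ Complex.slitPlane) :
    HasDerivAt phi0 ((1 / 2) * (1 + z⁻¹) ^ 2) z := by
  have h0 := ne_zero_of_neg_mem_slitPlane hz
  have h := (((hasDerivAt_id z).sub (hasDerivAt_inv h0)).const_mul (1 / 2 : ℂ)).add
    ((hasDerivAt_neg z).clog hz)
  refine (h.congr_deriv ?_).congr_of_eventuallyEq (.of_forall fun w => ?_)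
  · field_simp
    ring
  · simp [phi0]

lemma deriv_phi0_hasDerivAt {z : ℂ} (hz : -z ∈ Complex.slitPlane) :
    HasDerivAt (deriv phi0) (-(z⁻¹ ^ 2 + z⁻¹ ^ 3)) z := by
  have h0 := ne_zero_of_neg_mem_slitPlane hz
  have h := (((hasDerivAt_inv h0).const_add 1).pow 2).const_mul (1 / 2 : ℂ)
  refine (h.congr_deriv ?_).congr_of_eventuallyEq ?_
  · simp only [Nat.cast_ofNat, Nat.reduceSub, pow_one]
    field_simp
  · filter_upwards [eventually_neg_mem_slitPlane hz] with w hw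
    simp [(phi0_hasDerivAt hw).deriv]

lemma iteratedDeriv_two_phi0 {z : ℂ} (hz : -z ∈ Complex.slitPlane) :
    iteratedDeriv 2 phi0 z = -(z⁻¹ ^ 2 + z⁻¹ ^ 3) := by
  rw [iteratedDeriv_succ, iteratedDeriv_one, (deriv_phi0_hasDerivAt hz).deriv]

lemma iteratedDeriv_three_phi0 : iteratedDeriv 3 phi0 (-1) = 1 := by
  rw [iteratedDeriv_succ]
  have h1 := hasDerivAt_inv (show (-1 : ℂ) ≠ 0 by norm_num)
  have h := ((h1.pow 2).add (h1.pow 3)).neg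
  have h' : HasDerivAt (iteratedDeriv 2 phi0) 1 (-1) := by
    refine (h.congr_deriv ?_).congr_of_eventuallyEq ?_
    · norm_num
    · filter_upwards [eventually_neg_mem_slitPlane neg_one_mem] with w hw
      simp [iteratedDeriv_two_phi0 hw]
  exact h'.deriv

/-- An analytic function whose Taylor polynomial of order two vanishes at `c` is `(z - c) ^ 3` times
an analytic function, whose value at `c` is the third Taylor coefficient. The factor is the third
iterated difference quotient at `c`. -/
lemma exists_cubic_factor {φ : ℂ → ℂ} {c : ℂ} (hφ : AnalyticAt ℂ φ c) (h0 : φ c = 0)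
    (h1 : deriv φ c = 0) (h2 : iteratedDeriv 2 φ c = 0) :
    ∃ g : ℂ → ℂ, AnalyticAt ℂ g c ∧ g c = iteratedDeriv 3 φ c / 6 ∧
      ∀ z, φ z = (z - c) ^ 3 * g z := by
  have hp := hφ.hasFPowerSeriesAt
  have e (n : ℕ) : (Function.swap dslope c)^[n] φ c = iteratedDeriv n φ c / (n.factorial : ℂ) := by
    rw [← (hp.has_fpower_series_iterate_dslope_fslope n).coeff_zero 1,
      ← FormalMultilinearSeries.coeff, FormalMultilinearSeries.coeff_iterate_fslope, zero_add,
      FormalMultilinearSeries.coeff_ofScalars]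
  refine ⟨(Function.swap dslope c)^[3] φ,
    (hp.has_fpower_series_iterate_dslope_fslope 3).analyticAt, ?_, fun z => ?_⟩
  · simpa [Nat.factorial] using e 3
  · have e1 := e 1
    have e2 := e 2
    simp only [iteratedDeriv_one, h1, h2, zero_div, Function.iterate_succ, Function.iterate_zero,
      Function.comp, id, Function.swap] at e1 e2 ⊢
    have k1 := sub_smul_dslope φ c z
    have k2 := sub_smul_dslope (dslope φ c) c z
    have k3 := sub_smul_dslope (dslope (dslope φ c) c) c z
    rw [smul_eq_mul] at k1 k2 k3
    rw [h0, sub_zero] at k1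
    rw [e1, sub_zero] at k2
    rw [e2, sub_zero] at k3
    rw [← k1, ← k2, ← k3]
    ring

lemma exp_log_quarter_div_three :
    Complex.exp (Complex.log (1 / 4) / 3) = (((2 : ℝ) ^ (-(2 : ℝ) / 3) : ℝ) : ℂ) := by
  have h4 : Real.log (1 / 4) = -2 * Real.log 2 := by
    rw [show (1 / 4 : ℝ) = 2 ^ (-2 : ℝ) by norm_num [Real.rpow_neg], Real.log_rpow (by norm_num)]
  rw [Real.rpow_def_of_pos (by norm_num), show (1 / 4 : ℂ) = ((1 / 4 : ℝ) : ℂ) by norm_num,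
    ← Complex.ofReal_log (by norm_num), h4]
  push_cast
  congr 1
  ring

/-- If `g c = 1 / 6`, then `(3 / 2) * ((z - c) ^ 3 * g z)` has near `c` an injective analytic cube
root, with derivative `(1 / 4) ^ (1 / 3) = 2 ^ (-2 / 3)` at `c`. -/
lemma exists_cube_root {g : ℂ → ℂ} {c : ℂ} (hg : AnalyticAt ℂ g c) (hgc : g c = 1 / 6) :
    ∃ δ : ℝ, 0 < δ ∧ ∃ f : ℂ → ℂ,
      AnalyticOnNhd ℂ f (Metric.ball c δ) ∧ Set.InjOn f (Metric.ball c δ) ∧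
      (∀ z ∈ Metric.ball c δ, f z ^ 3 = (3 / 2) * ((z - c) ^ 3 * g z)) ∧
      f c = 0 ∧ deriv f c = (((2 : ℝ) ^ (-(2 : ℝ) / 3) : ℝ) : ℂ) := by
  have hc : (3 / 2) * g c = 1 / 4 := by rw [hgc]; norm_num
  have hh : AnalyticAt ℂ (fun z => (3 / 2) * g z) c := analyticAt_const.mul hg
  have hs : (3 / 2) * g c ∈ Complex.slitPlane := by
    rw [hc, Complex.mem_slitPlane_iff]
    left
    norm_num
  set r : ℂ → ℂ := fun z => Complex.exp (Complex.log ((3 / 2) * g z) / 3) with hr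
  have hra : AnalyticAt ℂ r c := ((hh.clog hs).div analyticAt_const (by norm_num)).cexp
  have hfa : AnalyticAt ℂ (fun z => (z - c) * r z) c :=
    (analyticAt_id.sub analyticAt_const).mul hra
  have hd : HasDerivAt (fun z => (z - c) * r z) (r c) c := by
    have := ((hasDerivAt_id c).sub_const c).mul hra.differentiableAt.hasDerivAt
    exact this.congr_deriv (by simp)
  have hrc : r c = (((2 : ℝ) ^ (-(2 : ℝ) / 3) : ℝ) : ℂ) := by
    rw [← exp_log_quarter_div_three, ← hc]
  have hstrict : HasStrictDerivAt (fun z => (z - c) * r z) (r c) c := by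
    rw [← hd.deriv]
    exact hfa.hasStrictDerivAt
  obtain ⟨s, hsn, hinj⟩ : ∃ s ∈ nhds c, Set.InjOn (fun z => (z - c) * r z) s := by
    have h := hstrict.hasStrictFDerivAt_equiv (Complex.exp_ne_zero _)
    exact ⟨_, (h.toOpenPartialHomeomorph _).open_source.mem_nhds
      h.mem_toOpenPartialHomeomorph_source, (h.toOpenPartialHomeomorph _).injOn⟩
  have hne : ∀ᶠ z in nhds c, (3 / 2) * g z ≠ 0 :=
    hh.continuousAt.eventually_ne (Complex.slitPlane_ne_zero hs)
  obtain ⟨δ, hδ, hball⟩ := Metric.eventually_nhds_iff_ball.mp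
    ((hfa.eventually_analyticAt.and hne).and hsn)
  refine ⟨δ, hδ, fun z => (z - c) * r z, fun z hz => (hball z hz).1.1,
    hinj.mono fun z hz => (hball z hz).2, fun z hz => ?_, by simp, hd.deriv.trans hrc⟩
  have hcube : r z ^ 3 = (3 / 2) * g z := by
    rw [hr, ← Complex.exp_nat_mul]
    push_cast
    rw [mul_div_cancel₀ _ (by norm_num), Complex.exp_log (hball z hz).1.2]
  rw [mul_pow, hcube]
  ring

/-- the function `φ₀(z) = (1/2)(z - 1/z) + Log z ∓ πi` (for `± Im z > 0`)
extends analytically to `ℂ ∖ [0,∞)`, vanishes to third order at `z = -1` with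
`φ₀'''(-1) = 1`, and `f = ((3/2)φ₀)^{1/3}` is an injective analytic (conformal) mapping
near `z = -1` with `f(-1) = 0` and `f'(-1) = 2^{-2/3}`. -/
theorem phi0_conformal :
    ∃ φ : ℂ → ℂ,
      AnalyticOnNhd ℂ φ {z : ℂ | ¬(0 ≤ z.re ∧ z.im = 0)} ∧
      (∀ z : ℂ, 0 < z.im →
        φ z = (1 / 2) * (z - 1 / z) + Complex.log z - (π : ℂ) * Complex.I) ∧
      (∀ z : ℂ, z.im < 0 →
        φ z = (1 / 2) * (z - 1 / z) + Complex.log z + (π : ℂ) * Complex.I) ∧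
      (∀ z : ℂ, z.im = 0 → z.re < 0 →
        φ z = (1 / 2) * (z - 1 / z) + Complex.log z - (π : ℂ) * Complex.I) ∧
      φ (-1) = 0 ∧ deriv φ (-1) = 0 ∧ iteratedDeriv 2 φ (-1) = 0 ∧
      iteratedDeriv 3 φ (-1) = 1 ∧
      ∃ δ : ℝ, 0 < δ ∧ ∃ f : ℂ → ℂ,
        AnalyticOnNhd ℂ f (Metric.ball (-1 : ℂ) δ) ∧
        Set.InjOn f (Metric.ball (-1 : ℂ) δ) ∧
        (∀ z ∈ Metric.ball (-1 : ℂ) δ, f z ^ 3 = (3 / 2) * φ z) ∧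
        f (-1) = 0 ∧
        deriv f (-1) = (((2 : ℝ) ^ (-(2 : ℝ) / 3) : ℝ) : ℂ) := by
  have hv : phi0 (-1) = 0 := by simp [phi0]
  have hd : deriv phi0 (-1) = 0 := by
    rw [(phi0_hasDerivAt neg_one_mem).deriv]
    norm_num
  have hd2 : iteratedDeriv 2 phi0 (-1) = 0 := by
    rw [iteratedDeriv_two_phi0 neg_one_mem]
    norm_num
  refine ⟨phi0, fun z hz => phi0_analyticAt ((neg_mem_slitPlane_iff z).mpr hz), fun z hz => ?_,
    fun z hz => ?_, fun z hz hz' => ?_, hv, hd, hd2, iteratedDeriv_three_phi0, ?_⟩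
  · simp only [phi0, Complex.log, norm_neg, Complex.arg_neg_eq_arg_sub_pi_of_im_pos hz]
    push_cast
    ring
  · simp only [phi0, Complex.log, norm_neg, Complex.arg_neg_eq_arg_add_pi_of_im_neg hz]
    push_cast
    ring
  · have h1 : Complex.arg z = π := Complex.arg_eq_pi_iff.mpr ⟨hz', hz⟩
    have h2 : Complex.arg (-z) = 0 :=
      Complex.arg_eq_zero_iff.mpr ⟨by simpa using hz'.le, by simpa using hz⟩
    simp only [phi0, Complex.log, norm_neg, h1, h2]
    push_cast
    ring
  · obtain ⟨g, hg, hgc, hfac⟩ := exists_cubic_factor (phi0_analyticAt neg_one_mem) hv hd hd2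
    rw [iteratedDeriv_three_phi0] at hgc
    obtain ⟨δ, hδ, f, hfa, hinj, hcube, hf0, hfd⟩ := exists_cube_root hg hgc
    exact ⟨δ, hδ, f, hfa, hinj, fun z hz => by rw [hcube z hz, hfac z], hf0, hfd⟩
end

section
/- For every ν ∈ ℕ there exists a real-analytic function u : ℝ → ℝ, defined and pole-free on the whole real axis, satisfying u''(x) = 2u(x)³ + x·u(x) + ν + 1/2 for all x ∈ ℝ, and constants M > 0, C > 0 such that |u(x) + (ν+1/2)/x| ≤ C·x^{−5/2} for all x > M and |u(x) + sqrt(−x/2) − (ν+1/2)/(2x)| ≤ C·(−x)^{−5/2} for all x < −M. (That is, for ν ∈ ℕ the Hastings–McLeod solution of the inhomogeneous Painlevé II equation with parameter ν + 1/2 has no poles on the real axis.) -/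
/-!
The theorem holds for every real `α = ν + 1/2 ≥ 1/2`, by the method of barriers. Put `w = -u`, so
that `w'' = 2 w³ + x w - α`. For `β > 0` let `W_β x` be the positive root of `2 w³ + x w = β`. Its
second derivative is small, so `V = W_{α/2}` is a subsolution and `U = W_{2α}` a supersolution
(`curve_sub`, `curve_super`), and `V ≤ U`. Above `V` the nonlinearity is strictly increasing
in `w`: its slope `6 w² + x` is at least `max (1/2) |x|` (`IsRootCurve.one_half_le`,
`IsRootCurve.abs_le`). Consequently the maximum principle applies to differences of functions
lying above `V`.

* On `[-n, n]` with boundary values `U (±n)`, a contraction argument between the barriers gives a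
  solution (`exists_bvp`). These solutions decrease with `n`, and their limit is a solution on the
  whole line with `V ≤ w ≤ U` (`exists_solution`). In particular it has no poles.
* Comparing `w` with `W_α` by means of the function `(100 + x²)^(-5/4)`, which dominates
  `W_α'' / (1 + |x|)` up to a constant, gives `w = W_α + O(|x|^(-5/2))` (`abs_sub_le`). The
  expansions of the algebraic function `W_α` at `±∞` are elementary.
* Analyticity follows from the equation itself, which gives factorial bounds on all derivatives
  (`analyticAt_of_painleve`).
-/

namespace HastingsMcLeod

open Set Filter Topology

/-! ### The barriers: roots of `2 w³ + x w = β` -/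

/-- `W x` is a positive root `w` of the cubic `2 w³ + x w = β`, for every `x`. For `β > 0` there is
exactly one such root, so the predicate determines `W`. -/
def IsRootCurve (β : ℝ) (W : ℝ → ℝ) : Prop :=
  ∀ x, 0 < W x ∧ 2 * W x ^ 3 + x * W x = β

lemma exists_isRootCurve {β : ℝ} (hβ : 0 < β) : ∃ W, IsRootCurve β W := by
  have key : ∀ x : ℝ, ∃ w, 0 < w ∧ 2 * w ^ 3 + x * w = β := by
    intro x
    -- at `b` the cubic is at least `β`, at `0` it vanishes
    set b := 1 + |x| + β with hb
    have hx := abs_nonneg x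
    have hx' := neg_abs_le x
    have hb0 : 0 ≤ b := by positivity
    have h1 : β ≤ 2 * b ^ 3 + x * b := by
      have h2 : 0 ≤ b * (b - 1) := mul_nonneg hb0 (by linarith)
      have h3 : 0 ≤ b * (b ^ 2 - b) := mul_nonneg hb0 (by nlinarith)
      have h4 : 0 ≤ b * (b + x - 1) := mul_nonneg hb0 (by linarith)
      nlinarith
    have := intermediate_value_Icc hb0 (f := fun w : ℝ => 2 * w ^ 3 + x * w) (by fun_prop)
    obtain ⟨w, hw, hwe⟩ := this (show β ∈ Icc _ _ by constructor <;> norm_num <;> linarith)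
    refine ⟨w, lt_of_le_of_ne hw.1 ?_, hwe⟩
    rintro rfl
    simp at hwe
    linarith
  choose W hW using key
  exact ⟨W, hW⟩

namespace IsRootCurve

variable {β : ℝ} {W : ℝ → ℝ}

/-- Subtracting the two cubic equations gives
`W x * W y * (x - y) = (W y - W x) * (β + 2 (W x + W y) W x W y)`, and for `β ≥ 1/4` the last factor
is at least `W x * W y`; so `W` is 1-Lipschitz. -/
lemma continuous (hβ : 1 / 4 ≤ β) (hW : IsRootCurve β W) : Continuous W := by
  refine (LipschitzWith.of_dist_le_mul (K := 1) fun x y => ?_).continuous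
  obtain ⟨ha, hae⟩ := hW x
  obtain ⟨hb, hbe⟩ := hW y
  set a := W x
  set b := W y
  have key : a * b * (x - y) = (b - a) * (β + 2 * (a + b) * (a * b)) := by
    linear_combination b * hae - a * hbe
  have hab : 0 < a * b := mul_pos ha hb
  have h1 : a * b ≤ β + 2 * (a + b) * (a * b) := by
    rcases le_total 1 (a + b) with h | h
    · nlinarith
    · nlinarith [sq_nonneg (a - b)]
  rw [Real.dist_eq, Real.dist_eq, NNReal.coe_one, one_mul]
  have h2 : a * b * |x - y| = |a - b| * (β + 2 * (a + b) * (a * b)) := by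
    rw [← abs_of_pos hab, ← abs_mul, key, abs_mul, abs_sub_comm b a, abs_of_pos hab,
      abs_of_pos (lt_of_lt_of_le hab h1)]
  have h3 : a * b * |a - b| ≤ a * b * |x - y| := by
    rw [h2, mul_comm]; exact mul_le_mul_of_nonneg_left h1 (abs_nonneg _)
  exact le_of_mul_le_mul_left h3 hab

/-- `W` is a right inverse of the strictly decreasing function `w ↦ β / w - 2 w²`. -/
lemma hasDerivAt (hβ : 1 / 4 ≤ β) (hW : IsRootCurve β W) (x : ℝ) :
    HasDerivAt W (-(W x) ^ 2 / (4 * W x ^ 3 + β)) x := by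
  obtain ⟨ha, hae⟩ := hW x
  have hz : 0 < W x ^ 3 := by positivity
  have h1 : HasDerivAt (fun w : ℝ => β / w - 2 * w ^ 2)
      (-β / W x ^ 2 - 2 * (2 * W x)) (W x) := by
    have := ((hasDerivAt_inv ha.ne').const_mul β).sub (((hasDerivAt_id (W x)).pow 2).const_mul 2)
    refine (this.congr_deriv ?_).congr_of_eventuallyEq (.of_forall fun w => ?_)
    · simp; ring
    · simp [div_eq_mul_inv]
  have h2 := HasDerivAt.of_local_left_inverse (hW.continuous hβ).continuousAt h1
    (by
      have : 0 < β / W x ^ 2 := by positivity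
      rw [neg_div]; exact ne_of_lt (by linarith))
    (.of_forall fun y => by
      obtain ⟨hb, hbe⟩ := hW y
      field_simp
      linarith)
  refine h2.congr_deriv ?_
  rw [inv_eq_one_div, div_eq_div_iff]
  · field_simp
    ring
  · have : 0 < β / W x ^ 2 := by positivity
    rw [neg_div]; exact ne_of_lt (by linarith)
  · positivity

/-- The second derivative of `W`, as a rational function of `W x ^ 3`. -/
lemma hasDerivAt_deriv (hβ : 1 / 4 ≤ β) (hW : IsRootCurve β W) (x : ℝ) :
    HasDerivAt (fun y => -(W y) ^ 2 / (4 * W y ^ 3 + β))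
      (W x ^ 3 * (2 * β - 4 * W x ^ 3) / (4 * W x ^ 3 + β) ^ 3) x := by
  obtain ⟨ha, hae⟩ := hW x
  have hz : 0 < W x ^ 3 := by positivity
  have hd := hW.hasDerivAt hβ x
  have hne : 4 * W x ^ 3 + β ≠ 0 := by positivity
  have := ((hd.fun_pow 2).fun_neg).fun_div (((hd.fun_pow 3).const_mul 4).add_const β) hne
  refine this.congr_deriv ?_
  simp only [Nat.cast_ofNat]
  field_simp
  ring

/-- The `w`-derivative of `2 w³ + x w` on the root curve is bounded away from zero: this makes
the linearized equation coercive. -/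
lemma one_half_le (hβ : 1 / 4 ≤ β) (hW : IsRootCurve β W) (x : ℝ) : 1 / 2 ≤ 6 * W x ^ 2 + x := by
  obtain ⟨ha, hae⟩ := hW x
  by_contra! h
  rcases le_total (1 / 2) (W x) with h1 | h1 <;> nlinarith

/-- The coercivity of the linearized equation grows linearly with `|x|`. -/
lemma abs_le (hβ : 1 / 4 ≤ β) (hW : IsRootCurve β W) (x : ℝ) : |x| ≤ 6 * W x ^ 2 + x := by
  obtain ⟨ha, hae⟩ := hW x
  rcases le_total 0 x with h | h
  · rw [abs_of_nonneg h]; nlinarith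
  · rw [abs_of_nonpos h]
    have : 0 < 2 * W x ^ 2 + x := by
      by_contra! h2
      nlinarith
    nlinarith

end IsRootCurve

/-- Root curves are ordered by their level. -/
lemma IsRootCurve.le {β γ : ℝ} {V W : ℝ → ℝ} (hV : IsRootCurve β V) (hW : IsRootCurve γ W)
    (hβ : 0 < β) (h : β ≤ γ) (x : ℝ) : V x ≤ W x := by
  obtain ⟨ha, hae⟩ := hV x
  obtain ⟨hb, hbe⟩ := hW x
  by_contra! h2
  have h3 : 0 < 2 * W x ^ 2 + x := by
    by_contra! h4
    nlinarith
  have h4 : V x * (2 * W x ^ 2 + x) ≤ V x * (2 * V x ^ 2 + x) := by gcongr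
  nlinarith [mul_lt_mul_of_pos_right h2 h3]

/-- The root curve `V` of level `α / 2` is a subsolution of `w'' = 2 w³ + x w - α`: with `z = V x ^ 3`
the right-hand side is `V'' x`, and `2 V³ + x V - α = -(α / 2)`. -/
lemma curve_sub {α : ℝ} (hα : 1 / 2 ≤ α) {z : ℝ} (hz : 0 < z) :
    -(α / 2) ≤ z * (2 * (α / 2) - 4 * z) / (4 * z + α / 2) ^ 3 := by
  obtain ⟨β, rfl⟩ : ∃ β, α = 2 * β := ⟨α / 2, by ring⟩
  have hβ : 1 / 4 ≤ β := by linarith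
  have hβ2 : 1 / 16 ≤ β ^ 2 := by nlinarith
  rw [le_div_iff₀ (by positivity)]
  have h1 : 0 ≤ z * (16 * z ^ 2 - z + 1 / 2) := mul_nonneg hz.le (by nlinarith [sq_nonneg (z - 1/8)])
  have h2 : 16 * z ^ 3 ≤ β * 64 * z ^ 3 := by gcongr; linarith
  have h3 : 3 * z ^ 2 ≤ β ^ 2 * 48 * z ^ 2 := by gcongr; linarith
  have h4 : z / 2 ≤ 2 * β * z := by nlinarith
  have h5 : 0 ≤ 12 * β ^ 3 * z + β ^ 4 := by positivity
  nlinarith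

/-- The root curve `U` of level `2 α` is a supersolution of `w'' = 2 w³ + x w - α`: with `z = U x ^ 3`
the left-hand side is `U'' x`, and `2 U³ + x U - α = α`. -/
lemma curve_super {α : ℝ} (hα : 1 / 2 ≤ α) {z : ℝ} (hz : 0 < z) :
    z * (2 * (2 * α) - 4 * z) / (4 * z + 2 * α) ^ 3 ≤ α := by
  have hα0 : 0 < α := by linarith
  rw [div_le_iff₀ (by positivity)]
  have h1 : 4 * z ≤ (4 * z + 2 * α) ^ 3 := by
    have : 12 * z ≤ 48 * α ^ 2 * z := by gcongr; nlinarith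
    have : 0 ≤ 64 * z ^ 3 + 96 * z ^ 2 * α + 8 * α ^ 3 := by positivity
    nlinarith
  have := mul_le_mul_of_nonneg_left h1 hα0.le
  nlinarith [mul_pos hz hz]

/-! ### Maximum principle and the linear boundary value problem -/

/-- Maximum principle: a function that is convex wherever it is positive, and nonpositive at both
ends of an interval, is nonpositive throughout. -/
lemma nonpos_of_deriv2_pos {a b : ℝ} {e e' e'' : ℝ → ℝ}
    (hc : ContinuousOn e (Icc a b)) (h1 : ∀ x ∈ Ioo a b, HasDerivAt e (e' x) x)
    (h2 : ∀ x ∈ Ioo a b, HasDerivAt e' (e'' x) x) (ha : e a ≤ 0) (hb : e b ≤ 0)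
    (hpos : ∀ x ∈ Ioo a b, 0 < e x → 0 < e'' x) : ∀ x ∈ Icc a b, e x ≤ 0 := by
  intro x hx
  by_contra! hex
  obtain ⟨y, hy, hmax⟩ := isCompact_Icc.exists_isMaxOn ⟨x, hx⟩ hc
  have hey : 0 < e y := lt_of_lt_of_le hex (hmax hx)
  have hyI : y ∈ Ioo a b := by
    refine ⟨lt_of_le_of_ne hy.1 ?_, lt_of_le_of_ne hy.2 ?_⟩
    · rintro rfl; linarith
    · rintro rfl; linarith
  have hlm : IsLocalMax e y := hmax.isLocalMax (Icc_mem_nhds hyI.1 hyI.2)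
  have hev : ∀ᶠ z in 𝓝 y, z ∈ Ioo a b := isOpen_Ioo.mem_nhds hyI
  have hd0 : e' y = 0 := hlm.hasDerivAt_eq_zero (h1 y hyI)
  have hde : deriv e =ᶠ[𝓝 y] e' := hev.mono fun z hz => (h1 z hz).deriv
  have hdd : deriv (deriv e) y = e'' y := by rw [hde.deriv_eq, (h2 y hyI).deriv]
  have hmin : IsLocalMin e y := isLocalMin_of_deriv_deriv_pos (by rw [hdd]; exact hpos y hyI hey)
    (by rw [(h1 y hyI).deriv, hd0]) (h1 y hyI).continuousAt
  -- `e` would be locally constant at a nondegenerate critical point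
  have hconst : e =ᶠ[𝓝 y] fun _ => e y := by
    filter_upwards [hlm, hmin] with z hz1 hz2 using le_antisymm hz1 hz2
  have h0 : deriv e =ᶠ[𝓝 y] fun _ => 0 := by
    simpa using hconst.deriv
  have : e'' y = 0 := by rw [← hdd, h0.deriv_eq]; simp
  exact (hpos y hyI hey).ne' this

/-- The Dirichlet problem `v'' = μ² v + g` on `[-n, n]` is solvable, by variation of constants. The
solution is produced on all of `ℝ`, so that no one-sided derivatives occur at the end points. -/
lemma exists_linear_bvp {μ n : ℝ} (hμ : 0 < μ) (hn : 0 < n) {g : ℝ → ℝ} (hg : Continuous g)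
    (a b : ℝ) : ∃ v v' : ℝ → ℝ, (∀ x, HasDerivAt v (v' x) x) ∧
      (∀ x, HasDerivAt v' (μ ^ 2 * v x + g x) x) ∧ v (-n) = a ∧ v n = b := by
  set Cg : ℝ → ℝ := fun x => ∫ t in (0 : ℝ)..x, Real.cosh (μ * t) * g t with hCg
  set Sg : ℝ → ℝ := fun x => ∫ t in (0 : ℝ)..x, Real.sinh (μ * t) * g t with hSg
  have hC : ∀ x, HasDerivAt Cg (Real.cosh (μ * x) * g x) x := fun x =>
    (Continuous.integral_hasStrictDerivAt (by fun_prop) 0 x).hasDerivAt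
  have hS : ∀ x, HasDerivAt Sg (Real.sinh (μ * x) * g x) x := fun x =>
    (Continuous.integral_hasStrictDerivAt (by fun_prop) 0 x).hasDerivAt
  have hch : ∀ x, HasDerivAt (fun x => Real.cosh (μ * x)) (μ * Real.sinh (μ * x)) x := fun x => by
    simpa [mul_comm] using ((hasDerivAt_id x).const_mul μ).cosh
  have hsh : ∀ x, HasDerivAt (fun x => Real.sinh (μ * x)) (μ * Real.cosh (μ * x)) x := fun x => by
    simpa [mul_comm] using ((hasDerivAt_id x).const_mul μ).sinh
  have hcn : 0 < Real.cosh (μ * n) := Real.cosh_pos _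
  have hsn : 0 < Real.sinh (μ * n) := Real.sinh_pos_iff.2 (mul_pos hμ hn)
  set p : ℝ → ℝ := fun x => (Real.sinh (μ * x) * Cg x - Real.cosh (μ * x) * Sg x) / μ with hp
  -- `p` is a particular solution; `A` and `B` match the even and odd parts of the boundary data
  set A := (a - p (-n) + (b - p n)) / (2 * Real.cosh (μ * n)) with hA
  set B := (b - p n - (a - p (-n))) / (2 * Real.sinh (μ * n)) with hB
  refine ⟨fun x => p x + A * Real.cosh (μ * x) + B * Real.sinh (μ * x),
    fun x => (Real.cosh (μ * x) * Cg x - Real.sinh (μ * x) * Sg x)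
      + A * (μ * Real.sinh (μ * x)) + B * (μ * Real.cosh (μ * x)), fun x => ?_, fun x => ?_, ?_, ?_⟩
  · have := (((((hsh x).mul (hC x)).sub ((hch x).mul (hS x))).div_const μ).add
      ((hch x).const_mul A)).add ((hsh x).const_mul B)
    refine this.congr_deriv ?_
    field_simp
    ring
  · have := ((((hch x).mul (hC x)).sub ((hsh x).mul (hS x))).add
      (((hsh x).const_mul μ).const_mul A)).add (((hch x).const_mul μ).const_mul B)
    refine this.congr_deriv ?_
    simp only [hp]
    field_simp
    linear_combination (g x) * Real.cosh_sq_sub_sinh_sq (μ * x)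
  · simp only [mul_neg, Real.cosh_neg, Real.sinh_neg, hA, hB]
    field_simp
    ring
  · simp only [hA, hB]
    field_simp
    ring

/-! ### The nonlinear problem on a bounded interval -/

/-- The Painlevé equation has a solution on `[-n, n]` between the barriers, equal to the upper
barrier at both ends. It is the fixed point of the map `Φ` sending `w` to the solution of
`v'' - μ² v = 2 w³ + x w - α - μ² w`; for `μ` large, `Φ` preserves the set `s` of continuous
functions between the barriers and, by coercivity, contracts it in the sup norm. -/
lemma exists_bvp {α : ℝ} (hα : 1 / 2 ≤ α) {V U : ℝ → ℝ} (hV : IsRootCurve (α / 2) V)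
    (hU : IsRootCurve (2 * α) U) {n : ℝ} (hn : 0 < n) :
    ∃ v v' : ℝ → ℝ, (∀ x, HasDerivAt v (v' x) x) ∧
      (∀ x ∈ Icc (-n) n, HasDerivAt v' (2 * v x ^ 3 + x * v x - α) x) ∧
      v (-n) = U (-n) ∧ v n = U n ∧ (∀ x ∈ Icc (-n) n, V x ≤ v x ∧ v x ≤ U x) := by
  have hβ1 : 1 / 4 ≤ α / 2 := by linarith
  have hβ2 : 1 / 4 ≤ 2 * α := by linarith
  have hVc := hV.continuous hβ1
  have hUc := hU.continuous hβ2
  have hVU : ∀ x, V x ≤ U x := hV.le hU (by linarith) (by linarith)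
  obtain ⟨B, hB⟩ := isCompact_Icc.exists_bound_of_continuousOn
    (f := fun x => 6 * U x ^ 2 + x) (s := Icc (-n) n) (by fun_prop)
  -- with `μ² ≥ 6 U² + x`, the function `w ↦ 2 w³ + x w - μ² w` is decreasing between the barriers
  set μ := max 1 B with hμdef
  have hμ1 : 1 ≤ μ := le_max_left _ _
  have hμ0 : 0 < μ := by linarith
  have hμB : ∀ x ∈ Icc (-n) n, 6 * U x ^ 2 + x ≤ μ ^ 2 := fun x hx => by
    have h1 := (le_abs_self _).trans (hB x hx)
    have h2 : B ≤ μ := le_max_right _ _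
    nlinarith
  -- the difference quotient of the nonlinearity
  set q : ℝ → ℝ → ℝ → ℝ := fun x a b => 2 * (a ^ 2 + a * b + b ^ 2) + x with hq
  have hqb : ∀ x ∈ Icc (-n) n, ∀ a b, V x ≤ a → a ≤ U x → V x ≤ b → b ≤ U x →
      1 / 2 ≤ q x a b ∧ q x a b ≤ μ ^ 2 := by
    intro x hx a b h1 h2 h3 h4
    have hV0 := (hV x).1
    have := hV.one_half_le hβ1 x
    have := hμB x hx
    simp only [hq]
    have g1 : V x ^ 2 ≤ a ^ 2 := by gcongr
    have g2 : V x ^ 2 ≤ b ^ 2 := by gcongr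
    have g3 : V x * V x ≤ a * b := by gcongr; linarith
    have g4 : a ^ 2 ≤ U x ^ 2 := by gcongr; linarith
    have g5 : b ^ 2 ≤ U x ^ 2 := by gcongr; linarith
    have g6 : a * b ≤ U x * U x := by gcongr <;> linarith
    constructor <;> nlinarith
  have hsub : -n ≤ n := by linarith
  set I := Icc (-n) n with hI
  set gf : C(I, ℝ) → ℝ → ℝ := fun w => IccExtend hsub
    (fun y : I => 2 * w y ^ 3 + y * w y - α - μ ^ 2 * w y) with hgf
  have hgc : ∀ w, Continuous (gf w) := fun w => Continuous.Icc_extend' (by fun_prop)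
  have hgI : ∀ w, ∀ x (hx : x ∈ I), gf w x
      = 2 * w ⟨x, hx⟩ ^ 3 + x * w ⟨x, hx⟩ - α - μ ^ 2 * w ⟨x, hx⟩ := fun w x hx => by
    simp only [hgf]; rw [IccExtend_of_mem _ _ hx]
  choose T T' hT hT' hTa hTb using fun w : C(I, ℝ) =>
    exists_linear_bvp hμ0 hn (hgc w) (U (-n)) (U n)
  have hTc : ∀ w, Continuous (T w) := fun w =>
    continuous_iff_continuousAt.2 fun x => (hT w x).continuousAt
  set s : Set C(I, ℝ) := {w | ∀ x : I, V x ≤ w x ∧ w x ≤ U x} with hs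
  set Φ : C(I, ℝ) → C(I, ℝ) := fun w => ⟨fun x => T w x, by fun_prop⟩ with hΦ
  have hsc : IsComplete s := by
    refine IsClosed.isComplete ?_
    simp only [hs, ofPred_forall, ofPred_and]
    refine isClosed_iInter fun x => ?_
    exact (isClosed_le continuous_const (continuous_eval_const x)).inter
      (isClosed_le (continuous_eval_const x) continuous_const)
  have hmaps : MapsTo Φ s s := by
    intro w hw x
    have hx := x.2
    have lo := nonpos_of_deriv2_pos (a := -n) (b := n) (e := fun y => V y - T w y)
      (hVc.sub (hTc w)).continuousOn
      (fun y _ => (hV.hasDerivAt hβ1 y).sub (hT w y))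
      (fun y _ => (hV.hasDerivAt_deriv hβ1 y).sub (hT' w y))
      (by simp only [hTa]; linarith [hVU (-n)]) (by simp only [hTb]; linarith [hVU n]) (by
        intro y hy hpos
        have hyI : y ∈ I := Ioo_subset_Icc_self hy
        obtain ⟨w1, w2⟩ := hw ⟨y, hyI⟩
        simp only at w1 w2
        rw [hgI w y hyI]
        have hc := curve_sub hα (z := V y ^ 3) (pow_pos (hV y).1 3)
        have hr := (hV y).2
        have hqq := (hqb y hyI (V y) (w ⟨y, hyI⟩) le_rfl (hVU y) w1 w2).2
        have : 0 ≤ (μ ^ 2 - q y (V y) (w ⟨y, hyI⟩)) * (w ⟨y, hyI⟩ - V y) :=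
          mul_nonneg (by linarith) (by linarith)
        have hp2 : 0 < μ ^ 2 * (V y - T w y) := by positivity
        simp only [hq] at this
        nlinarith) x hx
    have hi := nonpos_of_deriv2_pos (a := -n) (b := n) (e := fun y => T w y - U y)
      ((hTc w).sub hUc).continuousOn
      (fun y _ => (hT w y).sub (hU.hasDerivAt hβ2 y))
      (fun y _ => (hT' w y).sub (hU.hasDerivAt_deriv hβ2 y))
      (by simp only [hTa]; linarith) (by simp only [hTb]; linarith) (by
        intro y hy hpos
        have hyI : y ∈ I := Ioo_subset_Icc_self hy
        obtain ⟨w1, w2⟩ := hw ⟨y, hyI⟩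
        simp only at w1 w2
        rw [hgI w y hyI]
        have hc := curve_super hα (z := U y ^ 3) (pow_pos (hU y).1 3)
        have hr := (hU y).2
        have hqq := (hqb y hyI (w ⟨y, hyI⟩) (U y) w1 w2 (hVU y) le_rfl).2
        have : 0 ≤ (μ ^ 2 - q y (w ⟨y, hyI⟩) (U y)) * (U y - w ⟨y, hyI⟩) :=
          mul_nonneg (by linarith) (by linarith)
        have hp2 : 0 < μ ^ 2 * (T w y - U y) := by positivity
        simp only [hq] at this
        nlinarith) x hx
    simp only [sub_nonpos] at lo hi
    exact ⟨lo, hi⟩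
  -- between the barriers `w ↦ 2 w³ + x w - μ² w` has slope in `[-(μ² - 1/2), 0]`, and inverting
  -- `v ↦ v'' - μ² v` gains a factor `μ⁻²`
  set K : ℝ := (μ ^ 2 - 1 / 2) / μ ^ 2 with hK
  have hμ2 : 1 ≤ μ ^ 2 := by nlinarith
  have hK0 : 0 ≤ K := div_nonneg (by linarith) (by linarith)
  have hK1 : K < 1 := by rw [hK, div_lt_one (by linarith)]; linarith
  have hKμ : μ ^ 2 * K = μ ^ 2 - 1 / 2 := by rw [hK]; field_simp
  have hlip : ∀ w₁ ∈ s, ∀ w₂ ∈ s, ∀ x ∈ I, T w₁ x - T w₂ x ≤ K * dist w₁ w₂ := by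
    intro w₁ hw₁ w₂ hw₂ x hx
    have hD : 0 ≤ dist w₁ w₂ := dist_nonneg
    have := nonpos_of_deriv2_pos (a := -n) (b := n)
      (e := fun y => T w₁ y - T w₂ y - K * dist w₁ w₂)
      (((hTc w₁).sub (hTc w₂)).sub continuous_const).continuousOn
      (fun y _ => ((hT w₁ y).sub (hT w₂ y)).sub_const _)
      (fun y _ => (hT' w₁ y).sub (hT' w₂ y))
      (by simp only [hTa]; nlinarith) (by simp only [hTb]; nlinarith) (by
        intro y hy hpos
        have hyI : y ∈ I := Ioo_subset_Icc_self hy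
        obtain ⟨u1, u2⟩ := hw₁ ⟨y, hyI⟩
        obtain ⟨u3, u4⟩ := hw₂ ⟨y, hyI⟩
        have hd : |w₁ ⟨y, hyI⟩ - w₂ ⟨y, hyI⟩| ≤ dist w₁ w₂ := by
          rw [← Real.dist_eq]; exact ContinuousMap.dist_apply_le_dist _
        simp only at u1 u2 u3 u4
        rw [hgI w₁ y hyI, hgI w₂ y hyI]
        set a := w₁ ⟨y, hyI⟩
        set b := w₂ ⟨y, hyI⟩
        obtain ⟨q1, q2⟩ := hqb y hyI a b u1 u2 u3 u4
        have h3 : (μ ^ 2 - q y a b) * (a - b) ≤ (μ ^ 2 - 1 / 2) * dist w₁ w₂ :=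
          calc (μ ^ 2 - q y a b) * (a - b) ≤ (μ ^ 2 - q y a b) * |a - b| :=
                mul_le_mul_of_nonneg_left (le_abs_self _) (by linarith)
            _ ≤ (μ ^ 2 - 1 / 2) * dist w₁ w₂ :=
                mul_le_mul (by linarith) hd (abs_nonneg _) (by linarith)
        have hp2 : 0 < μ ^ 2 * (T w₁ y - T w₂ y - K * dist w₁ w₂) := by positivity
        have h4 : μ ^ 2 * (K * dist w₁ w₂) = (μ ^ 2 - 1 / 2) * dist w₁ w₂ := by
          rw [← hKμ]; ring
        simp only [hq] at h3
        nlinarith) x hx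
    linarith
  have hcontr : ContractingWith ⟨K, hK0⟩ (hmaps.restrict Φ s s) := by
    refine ⟨by exact_mod_cast hK1, LipschitzWith.of_dist_le_mul fun w₁ w₂ => ?_⟩
    rw [Subtype.dist_eq, Subtype.dist_eq]
    refine (ContinuousMap.dist_le (by positivity)).2 fun x => ?_
    rw [Real.dist_eq, abs_le]
    have h1 := hlip w₁ w₁.2 w₂ w₂.2 x x.2
    have h2 := hlip w₂ w₂.2 w₁ w₁.2 x x.2
    rw [dist_comm] at h2
    constructor
    · change -(K * _) ≤ T w₁ x - T w₂ x
      linarith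
    · exact h1
  obtain ⟨w, hws, hwfix, -⟩ := hcontr.exists_fixedPoint' hsc hmaps
    (x := (⟨fun x => U x, by fun_prop⟩ : C(I, ℝ))) (fun x => ⟨hVU x, le_rfl⟩) (edist_ne_top _ _)
  have hfix : ∀ x (hx : x ∈ I), T w x = w ⟨x, hx⟩ := fun x hx => by
    have := congrArg (fun f : C(I, ℝ) => f ⟨x, hx⟩) hwfix
    exact this
  refine ⟨T w, T' w, hT w, fun x hx => ?_, hTa w, hTb w, fun x hx => ?_⟩
  · refine (hT' w x).congr_deriv ?_
    rw [hgI w x hx, ← hfix x hx]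
    ring
  · rw [hfix x hx]; exact hws ⟨x, hx⟩

/-! ### Passage to the whole line -/

section

open MeasureTheory

/-- The Painlevé equation has a solution on the whole line between the barriers. The solutions on
`[-n, n]` decrease with `n` because the boundary values are those of the upper barrier, and their
pointwise limit satisfies the equation, written as `w x = w 0 + p x + ∫₀ˣ ∫₀ᵗ (2 w³ + s w - α)`,
by dominated convergence. -/
lemma exists_solution {α : ℝ} (hα : 1 / 2 ≤ α) {V U : ℝ → ℝ} (hV : IsRootCurve (α / 2) V)
    (hU : IsRootCurve (2 * α) U) :
    ∃ w w' : ℝ → ℝ, (∀ x, HasDerivAt w (w' x) x) ∧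
      (∀ x, HasDerivAt w' (2 * w x ^ 3 + x * w x - α) x) ∧ ∀ x, V x ≤ w x ∧ w x ≤ U x := by
  have hβ1 : 1 / 4 ≤ α / 2 := by linarith
  have hVU : ∀ x, V x ≤ U x := hV.le hU (by linarith) (by linarith)
  choose v v' hv hv' hva hvb hvI using fun k : ℕ =>
    exists_bvp hα hV hU (show (0 : ℝ) < k + 1 by positivity)
  have hvc : ∀ k, Continuous (v k) := fun k =>
    continuous_iff_continuousAt.2 fun x => (hv k x).continuousAt
  have hmem : ∀ x : ℝ, ∀ᶠ k : ℕ in atTop, x ∈ Icc (-((k : ℝ) + 1)) (k + 1) := fun x => by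
    filter_upwards [eventually_ge_atTop ⌈|x|⌉₊] with k hk
    have h1 : |x| ≤ k := Nat.ceil_le.1 hk
    have := abs_le.1 h1
    constructor <;> linarith
  -- extended by the upper barrier, the solutions form a decreasing sequence
  classical
  set E : ℕ → ℝ → ℝ := fun k x => if x ∈ Icc (-((k : ℝ) + 1)) (k + 1) then v k x else U x with hE
  have hEV : ∀ k x, V x ≤ E k x := fun k x => by
    simp only [hE]; split_ifs with h
    exacts [(hvI k x h).1, hVU x]
  have hEU : ∀ k x, E k x ≤ U x := fun k x => by
    simp only [hE]; split_ifs with h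
    exacts [(hvI k x h).2, le_rfl]
  have hanti : ∀ x, Antitone fun k => E k x := fun x => antitone_nat_of_succ_le fun k => by
    by_cases h : x ∈ Icc (-((k : ℝ) + 1)) (k + 1)
    · have hsub : ∀ y ∈ Icc (-((k : ℝ) + 1)) (k + 1),
          y ∈ Icc (-(((k + 1 : ℕ) : ℝ) + 1)) ((k + 1 : ℕ) + 1) := fun y hy => by
        push_cast
        constructor <;> linarith [hy.1, hy.2]
      have hk0 : (0 : ℝ) ≤ k := Nat.cast_nonneg k
      simp only [hE]
      rw [if_pos h, if_pos (hsub x h)]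
      have := nonpos_of_deriv2_pos (a := -((k : ℝ) + 1)) (b := k + 1)
        (e := fun y => v (k + 1) y - v k y)
        ((hvc (k + 1)).sub (hvc k)).continuousOn
        (fun y _ => (hv (k + 1) y).sub (hv k y))
        (fun y hy => (hv' (k + 1) y (hsub y (Ioo_subset_Icc_self hy))).sub
          (hv' k y (Ioo_subset_Icc_self hy)))
        (by
          have := (hvI (k + 1) _ (hsub _ (left_mem_Icc.2 (by linarith)))).2
          simp only [hva]
          linarith)
        (by
          have := (hvI (k + 1) _ (hsub _ (right_mem_Icc.2 (by linarith)))).2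
          simp only [hvb]
          linarith)
        (by
          intro y hy hpos
          obtain ⟨h1, -⟩ := hvI (k + 1) y (hsub y (Ioo_subset_Icc_self hy))
          obtain ⟨h2, -⟩ := hvI k y (Ioo_subset_Icc_self hy)
          have hV0 := (hV y).1
          have h3 := hV.one_half_le hβ1 y
          set a := v (k + 1) y
          set b := v k y
          have g1 : V y ^ 2 ≤ a ^ 2 := by gcongr
          have g2 : V y ^ 2 ≤ b ^ 2 := by gcongr
          have g3 : V y * V y ≤ a * b := by gcongr; linarith
          have : 0 < (a - b) * (2 * (a ^ 2 + a * b + b ^ 2) + y) :=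
            mul_pos hpos (by nlinarith)
          nlinarith) x h
      linarith
    · have : E k x = U x := by simp only [hE]; rw [if_neg h]
      rw [this]; exact hEU _ _
  set w : ℝ → ℝ := fun x => ⨅ k, E k x with hw
  have hbdd : ∀ x, BddBelow (range fun k => E k x) := fun x =>
    ⟨V x, by rintro _ ⟨k, rfl⟩; exact hEV k x⟩
  have hlimE : ∀ x, Tendsto (fun k => E k x) atTop (𝓝 (w x)) := fun x =>
    tendsto_atTop_ciInf (hanti x) (hbdd x)
  have hlim : ∀ x, Tendsto (fun k => v k x) atTop (𝓝 (w x)) := fun x =>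
    (hlimE x).congr' ((hmem x).mono fun k hk => by simp only [hE]; rw [if_pos hk])
  have hwV : ∀ x, V x ≤ w x := fun x => le_ciInf fun k => hEV k x
  have hwU : ∀ x, w x ≤ U x := fun x => (ciInf_le (hbdd x) 0).trans (hEU 0 x)
  -- between the barriers `2 a³ + x a` lies in `[α / 2, 2 α]`
  have hfb : ∀ x a, V x ≤ a → a ≤ U x → ‖2 * a ^ 3 + x * a - α‖ ≤ α := by
    intro x a h1 h2
    obtain ⟨hV0, hVe⟩ := hV x
    obtain ⟨hU0, hUe⟩ := hU x
    have h3 := hV.one_half_le hβ1 x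
    have ha : 0 < a := by linarith
    have g1 : V x ^ 2 ≤ a ^ 2 := by gcongr
    have g2 : V x ^ 2 ≤ U x ^ 2 := by gcongr; linarith
    have g3 : V x * V x ≤ a * V x := by gcongr
    have g4 : V x * V x ≤ U x * a := by gcongr; linarith
    have k1 : 0 ≤ (a - V x) * (2 * (a ^ 2 + a * V x + V x ^ 2) + x) :=
      mul_nonneg (by linarith) (by nlinarith)
    have k2 : 0 ≤ (U x - a) * (2 * (U x ^ 2 + U x * a + a ^ 2) + x) :=
      mul_nonneg (by linarith) (by nlinarith)
    rw [Real.norm_eq_abs, abs_le]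
    constructor <;> nlinarith
  set F : ℕ → ℝ → ℝ := fun k x => 2 * v k x ^ 3 + x * v k x - α with hF
  set G : ℝ → ℝ := fun x => 2 * w x ^ 3 + x * w x - α with hG
  have hFc : ∀ k, Continuous (F k) := fun k => by have := hvc k; fun_prop
  have hFG : ∀ x, Tendsto (fun k => F k x) atTop (𝓝 (G x)) := fun x =>
    (((((hlim x).pow 3).const_mul 2).add ((hlim x).const_mul x)).sub_const α)
  have hGb : ∀ x, ‖G x‖ ≤ α := fun x => hfb x _ (hwV x) (hwU x)
  have hGm : Measurable G :=
    measurable_of_tendsto_metrizable (fun k => (hFc k).measurable) (tendsto_pi_nhds.2 hFG)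
  have hGi : ∀ a b, IntervalIntegrable G volume a b := fun a b =>
    (intervalIntegrable_const (c := α)).mono_fun hGm.aestronglyMeasurable
      (.of_forall fun x => (hGb x).trans (le_abs_self _))
  set H : ℝ → ℝ := fun t => ∫ s in (0 : ℝ)..t, G s with hH
  have hHc : Continuous H := intervalIntegral.continuous_primitive hGi 0
  -- on any compact interval, all but finitely many solutions obey the equation and the barriers
  have hunif : ∀ x : ℝ, ∀ᶠ k : ℕ in atTop, ∀ s ∈ uIcc 0 x, s ∈ Icc (-((k : ℝ) + 1)) (k + 1) :=
    fun x => by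
      filter_upwards [hmem x, hmem 0] with k hk hk0 s hs
      exact uIcc_subset_Icc hk0 hk hs
  have hFint : ∀ x, Tendsto (fun k => ∫ s in (0 : ℝ)..x, F k s) atTop (𝓝 (H x)) := fun x => by
    refine intervalIntegral.tendsto_integral_filter_of_dominated_convergence (fun _ => α)
      (.of_forall fun k => (hFc k).aestronglyMeasurable) ?_ intervalIntegrable_const
      (.of_forall fun s _ => hFG s)
    filter_upwards [hunif x] with k hk
    refine .of_forall fun s hs => ?_
    have := hvI k s (hk s (uIoc_subset_uIcc hs))
    exact hfb s _ this.1 this.2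
  have hFprim : ∀ k, Continuous fun t => ∫ s in (0 : ℝ)..t, F k s := fun k =>
    intervalIntegral.continuous_primitive (fun a b => (hFc k).intervalIntegrable a b) 0
  have hFint2 : ∀ x, Tendsto (fun k => ∫ t in (0 : ℝ)..x, ∫ s in (0 : ℝ)..t, F k s) atTop
      (𝓝 (∫ t in (0 : ℝ)..x, H t)) := fun x => by
    refine intervalIntegral.tendsto_integral_filter_of_dominated_convergence (fun _ => α * |x|)
      (.of_forall fun k => (hFprim k).aestronglyMeasurable) ?_ intervalIntegrable_const
      (.of_forall fun t _ => hFint t)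
    filter_upwards [hunif x] with k hk
    refine .of_forall fun t ht => ?_
    have ht' := uIoc_subset_uIcc ht
    have h1 : ‖∫ s in (0 : ℝ)..t, F k s‖ ≤ α * |t - 0| :=
      intervalIntegral.norm_integral_le_of_norm_le_const fun s hs => by
        have hs' : s ∈ uIcc 0 x := uIcc_subset_uIcc_left ht' (uIoc_subset_uIcc hs)
        have := hvI k s (hk s hs')
        exact hfb s _ this.1 this.2
    refine h1.trans ?_
    have h2 : |t - 0| ≤ |x - 0| := abs_sub_left_of_mem_uIcc ht'
    rw [sub_zero, sub_zero] at h2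
    rw [sub_zero]
    have : 0 ≤ α := by linarith
    gcongr
  have hrep : ∀ x, ∀ᶠ k in atTop,
      v k x = v k 0 + x * v' k 0 + ∫ t in (0 : ℝ)..x, ∫ s in (0 : ℝ)..t, F k s := fun x => by
    filter_upwards [hunif x] with k hk
    have h1 : ∀ t ∈ uIcc 0 x, v' k t = v' k 0 + ∫ s in (0 : ℝ)..t, F k s := fun t ht => by
      rw [intervalIntegral.integral_eq_sub_of_hasDerivAt
        (fun s hs => hv' k s (hk s (uIcc_subset_uIcc_left ht hs)))
        ((hFc k).intervalIntegrable _ _)]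
      ring
    have hi : IntervalIntegrable (fun t => v' k 0 + ∫ s in (0 : ℝ)..t, F k s) volume 0 x :=
      (continuous_const.add (hFprim k)).intervalIntegrable _ _
    have h2 := intervalIntegral.integral_eq_sub_of_hasDerivAt (a := 0) (b := x)
      (fun s hs => (hv k s).congr_deriv (h1 s hs)) hi
    rw [intervalIntegral.integral_add intervalIntegrable_const
      ((hFprim k).intervalIntegrable _ _), intervalIntegral.integral_const] at h2
    simp only [sub_zero, smul_eq_mul] at h2
    linarith
  -- the slopes at `0` converge, because the representation at `x = 1` expresses them by
  -- convergent quantities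
  set p : ℝ := w 1 - w 0 - ∫ t in (0 : ℝ)..1, H t with hp
  have hp' : Tendsto (fun k => v' k 0) atTop (𝓝 p) := by
    refine (((hlim 1).sub (hlim 0)).sub (hFint2 1)).congr' ?_
    filter_upwards [hrep 1] with k hk
    linarith
  have hwrep : ∀ x, w x = w 0 + x * p + ∫ t in (0 : ℝ)..x, H t := fun x =>
    tendsto_nhds_unique (hlim x)
      ((((hlim 0).add (hp'.const_mul x)).add (hFint2 x)).congr' ((hrep x).mono fun k hk => hk.symm))
  have hwd : ∀ x, HasDerivAt w (p + H x) x := fun x => by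
    have h1 := (((hasDerivAt_id x).mul_const p).const_add (w 0)).add
      (hHc.integral_hasStrictDerivAt 0 x).hasDerivAt
    exact (h1.congr_of_eventuallyEq (.of_forall hwrep)).congr_deriv (by ring)
  have hwc : Continuous w := continuous_iff_continuousAt.2 fun x => (hwd x).continuousAt
  have hGc : Continuous G := by fun_prop
  exact ⟨w, fun x => p + H x, hwd,
    fun x => (hGc.integral_hasStrictDerivAt 0 x).hasDerivAt.const_add p,
    fun x => ⟨hwV x, hwU x⟩⟩

end

/-! ### Comparison with the root curve -/

/-- The comparison function `φ x = (100 + x²)^(-5/4)` varies slowly: `|φ''| ≤ φ / 8`. The constant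
`100` serves to make `φ''` small relative to the coercivity constant `1/2`. -/
lemma exists_deriv_comparison : ∃ φ' φ'' : ℝ → ℝ,
    (∀ x : ℝ, HasDerivAt (fun y : ℝ => (100 + y ^ 2) ^ (-(5 : ℝ) / 4)) (φ' x) x) ∧
    (∀ x : ℝ, HasDerivAt φ' (φ'' x) x) ∧
    ∀ x : ℝ, |φ'' x| ≤ (100 + x ^ 2) ^ (-(5 : ℝ) / 4) / 8 := by
  have hb : ∀ x : ℝ, HasDerivAt (fun y : ℝ => 100 + y ^ 2) (2 * x) x := fun x => by
    simpa using ((hasDerivAt_id x).fun_pow 2).const_add 100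
  have hp : ∀ x : ℝ, (0 : ℝ) < 100 + x ^ 2 := fun x => by positivity
  refine ⟨fun x => 2 * x * (-(5 : ℝ) / 4) * (100 + x ^ 2) ^ (-(5 : ℝ) / 4 - 1),
    fun x => (2 * (-(5 : ℝ) / 4)) * (100 + x ^ 2) ^ (-(5 : ℝ) / 4 - 1)
      + 2 * x * (-(5 : ℝ) / 4) *
        (2 * x * (-(5 : ℝ) / 4 - 1) * (100 + x ^ 2) ^ (-(5 : ℝ) / 4 - 1 - 1)),
    fun x => (hb x).rpow_const (Or.inl (hp x).ne'), fun x => ?_, fun x => ?_⟩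
  · have h1 : HasDerivAt (fun x : ℝ => 2 * x * (-(5 : ℝ) / 4)) (2 * (-(5 : ℝ) / 4)) x := by
      simpa using ((hasDerivAt_id x).const_mul 2).mul_const (-(5 : ℝ) / 4)
    exact h1.mul ((hb x).rpow_const (Or.inl (hp x).ne'))
  · have hpx := hp x
    beta_reduce
    rw [Real.rpow_sub_one hpx.ne' (-(5 : ℝ) / 4 - 1), Real.rpow_sub_one hpx.ne' (-(5 : ℝ) / 4)]
    set P := (100 + x ^ 2) ^ (-(5 : ℝ) / 4) with hP
    have hP0 : 0 < P := Real.rpow_pos_of_pos hpx _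
    have e : 2 * (-(5 : ℝ) / 4) * (P / (100 + x ^ 2)) + 2 * x * (-(5 : ℝ) / 4) *
        (2 * x * (-(5 : ℝ) / 4 - 1) * (P / (100 + x ^ 2) / (100 + x ^ 2)))
        = P * ((35 / 4 * x ^ 2 - 250) / (100 + x ^ 2) ^ 2) := by
      field_simp; ring
    rw [e, abs_mul, abs_of_pos hP0, abs_div, abs_of_pos (pow_pos hpx 2), div_eq_mul_inv P]
    gcongr
    rw [div_le_iff₀ (by positivity), abs_le]
    constructor <;> nlinarith [sq_nonneg x, sq_nonneg (x ^ 2)]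

/-- A bound for the second derivative of the root curve `W` (the expression on the left) in terms of
the comparison function; `c` plays the role of the coercivity coefficient. -/
lemma abs_curvature_le {α : ℝ} (hα : 1 / 2 ≤ α) {W : ℝ → ℝ} (hW : IsRootCurve α W) {x c : ℝ}
    (hc1 : 1 / 2 ≤ c) (hc2 : |x| ≤ c) :
    |W x ^ 3 * (2 * α - 4 * W x ^ 3) / (4 * W x ^ 3 + α) ^ 3|
      ≤ c / 4 * (10000 * (100 + x ^ 2) ^ (-(5 : ℝ) / 4)) := by
  obtain ⟨hW0, hWe⟩ := hW x
  have hz : 0 < W x ^ 3 := by positivity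
  set z := W x ^ 3 with hzd
  have hx0 := abs_nonneg x
  have hpx : (0 : ℝ) < 100 + x ^ 2 := by positivity
  set r := (100 + x ^ 2) ^ ((1 : ℝ) / 2) with hr
  set ρ := (100 + x ^ 2) ^ ((3 : ℝ) / 4) with hρ
  have hr0 : 0 < r := Real.rpow_pos_of_pos hpx _
  have hρ0 : 0 < ρ := Real.rpow_pos_of_pos hpx _
  have hr2 : r ^ 2 = 100 + x ^ 2 := by
    rw [hr, ← Real.rpow_natCast, ← Real.rpow_mul hpx.le]; norm_num
  have hρr : ρ ^ 2 = r ^ 3 := by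
    rw [hρ, hr, ← Real.rpow_mul_natCast hpx.le, ← Real.rpow_mul_natCast hpx.le]; norm_num
  have hφ : (100 + x ^ 2) ^ (-(5 : ℝ) / 4) = (r * ρ)⁻¹ := by
    rw [hr, hρ, ← Real.rpow_add hpx, ← Real.rpow_neg hpx.le]; norm_num
  have hr10 : r ≤ 10 + |x| := by
    refine le_of_sq_le_sq ?_ (by positivity)
    rw [hr2, ← sq_abs x]; nlinarith
  -- `10 ≤ 20 c` and `|x| ≤ c`
  have hrc : r ≤ 21 * c := by linarith
  -- the cubic equation bounds `|x| W`, and `W ≤ 1 + W³`; hence `r W ≲ 4 z + α`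
  have hrW : r * W x ≤ 21 * (4 * z + α) := by
    have h1 : |x| * W x ≤ α + 2 * z := by
      rw [← abs_of_pos hW0, ← abs_mul, abs_le]
      constructor <;> linarith
    have h2 : W x ≤ 1 + z := by rw [hzd]; nlinarith [sq_nonneg (W x - 1)]
    nlinarith
  have hs : 0 < 4 * z + α := by positivity
  have h3 : z * r ^ 3 ≤ 21 ^ 3 * (4 * z + α) ^ 3 := by
    calc z * r ^ 3 = (r * W x) ^ 3 := by rw [hzd]; ring
      _ ≤ (21 * (4 * z + α)) ^ 3 := by gcongr
      _ = _ := by ring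
  -- square root of the product of `z ≤ (4 z + α) / 4` and `h3`; `21³ / 4 ≤ 49²`
  have h4 : z * ρ ≤ 49 * (4 * z + α) ^ 2 := by
    refine le_of_sq_le_sq ?_ (by positivity)
    calc (z * ρ) ^ 2 = z * (z * r ^ 3) := by rw [mul_pow, hρr]; ring
      _ ≤ ((4 * z + α) / 4) * (21 ^ 3 * (4 * z + α) ^ 3) := by gcongr; linarith
      _ ≤ (49 * (4 * z + α) ^ 2) ^ 2 := by
        have : 0 < (4 * z + α) ^ 4 := by positivity
        nlinarith
  have h5 : |z * (2 * α - 4 * z) / (4 * z + α) ^ 3| ≤ 2 * z / (4 * z + α) ^ 2 := by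
    rw [abs_div, abs_mul, abs_of_pos hz, abs_of_pos (pow_pos hs 3),
      div_le_div_iff₀ (by positivity) (by positivity)]
    have : |2 * α - 4 * z| ≤ 2 * (4 * z + α) := by rw [abs_le]; constructor <;> linarith
    calc z * |2 * α - 4 * z| * (4 * z + α) ^ 2 ≤ z * (2 * (4 * z + α)) * (4 * z + α) ^ 2 := by
          gcongr
      _ = _ := by ring
  refine h5.trans ?_
  rw [hφ, div_le_iff₀ (by positivity)]
  have h6 : 0 < r * ρ := by positivity
  rw [show c / 4 * (10000 * (r * ρ)⁻¹) * (4 * z + α) ^ 2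
    = (2500 * c * (4 * z + α) ^ 2) / (r * ρ) by field_simp; ring, le_div_iff₀ h6]
  calc 2 * z * (r * ρ) = 2 * r * (z * ρ) := by ring
    _ ≤ 2 * (21 * c) * (49 * (4 * z + α) ^ 2) := by gcongr
    _ ≤ _ := by
      have : 0 ≤ c * (4 * z + α) ^ 2 := by positivity
      nlinarith

/-- A solution between the barriers follows the root curve of level `α` up to `O(|x|^(-5/2))`.
On the set where `d = ±(w - W) > 10000 φ + ε` one has `d'' = c d ∓ W''` with `c ≥ max (1/2) |x|`,
so `d - 10000 φ - ε` is convex there; it is negative far out because `|y| |w y - W y|` is bounded. -/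
lemma abs_sub_le {α : ℝ} (hα : 1 / 2 ≤ α) {V W U w w' : ℝ → ℝ} (hV : IsRootCurve (α / 2) V)
    (hW : IsRootCurve α W) (hU : IsRootCurve (2 * α) U) (h1 : ∀ x, HasDerivAt w (w' x) x)
    (h2 : ∀ x, HasDerivAt w' (2 * w x ^ 3 + x * w x - α) x) (hw : ∀ x, V x ≤ w x ∧ w x ≤ U x)
    (x : ℝ) : |w x - W x| ≤ 10000 * (100 + x ^ 2) ^ (-(5 : ℝ) / 4) := by
  have hβ1 : 1 / 4 ≤ α / 2 := by linarith
  have hβ : 1 / 4 ≤ α := by linarith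
  have hVW : ∀ x, V x ≤ W x := hV.le hW (by linarith) (by linarith)
  have hWU : ∀ x, W x ≤ U x := hW.le hU (by linarith) (by linarith)
  obtain ⟨φ', φ'', hφ', hφ'', hφb⟩ := exists_deriv_comparison
  set φ : ℝ → ℝ := fun y : ℝ => (100 + y ^ 2) ^ (-(5 : ℝ) / 4) with hφ
  have hφ0 : ∀ y, 0 < φ y := fun y => Real.rpow_pos_of_pos (by positivity) _
  have hwc : Continuous w := continuous_iff_continuousAt.2 fun x => (h1 x).continuousAt
  have hWc := hW.continuous hβ
  have hφc : Continuous φ := continuous_iff_continuousAt.2 fun x => (hφ' x).continuousAt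
  have hgap : ∀ y, |y| * |w y - W y| ≤ 3 * α / 2 := fun y => by
    obtain ⟨a1, a2⟩ := hw y
    obtain ⟨hV0, hVe⟩ := hV y
    obtain ⟨hU0, hUe⟩ := hU y
    have hd : |w y - W y| ≤ U y - V y := by
      rw [abs_le]; constructor <;> linarith [hVW y, hWU y]
    -- `2 (U² + U V + V²) + y` is the difference quotient of the cubic between `V` and `U`
    have hq : |y| ≤ 2 * (U y ^ 2 + U y * V y + V y ^ 2) + y := by
      have := hV.abs_le hβ1 y
      have hUV : V y ≤ U y := by linarith
      nlinarith
    calc |y| * |w y - W y| ≤ (2 * (U y ^ 2 + U y * V y + V y ^ 2) + y) * (U y - V y) :=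
          mul_le_mul hq hd (abs_nonneg _) ((abs_nonneg _).trans hq)
      _ = 3 * α / 2 := by linear_combination hUe - hVe
  -- one-sided estimate for the difference with either sign
  have key : ∀ σ : ℝ, σ ^ 2 = 1 → σ * (w x - W x) ≤ 10000 * φ x := by
    intro σ hσ
    refine le_of_forall_pos_le_add fun ε hε => ?_
    have hσ1 : |σ| = 1 := by
      rcases mul_self_eq_one_iff.1 ((sq σ).symm.trans hσ) with h | h <;> simp [h]
    have hα0 : 0 < α := by linarith
    -- beyond `R` the decay of `w - W` makes the difference smaller than `ε`
    set R := |x| + 3 * α / (2 * ε) with hR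
    have hRε : 3 * α / 2 ≤ R * ε := by
      have : 3 * α / (2 * ε) * ε = 3 * α / 2 := by field_simp
      have := mul_nonneg (abs_nonneg x) hε.le
      rw [hR, add_mul]; linarith
    have hR0 : 0 < R := by positivity
    have hxR : |x| ≤ R := by rw [hR]; have : 0 < 3 * α / (2 * ε) := by positivity
                             linarith
    have hend : ∀ y, |y| = R → σ * (w y - W y) ≤ ε := fun y hy => by
      have g1 := hgap y
      rw [hy] at g1
      have g2 : |w y - W y| ≤ ε := le_of_mul_le_mul_left (g1.trans hRε) hR0
      refine (le_abs_self _).trans ?_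
      rwa [abs_mul, hσ1, one_mul]
    have := nonpos_of_deriv2_pos (a := -R) (b := R)
      (e := fun y => σ * (w y - W y) - 10000 * φ y - ε) (by fun_prop)
      (fun y _ => ((((h1 y).sub (hW.hasDerivAt hβ y)).const_mul σ).sub
        ((hφ' y).const_mul 10000)).sub_const ε)
      (fun y _ => (((h2 y).sub (hW.hasDerivAt_deriv hβ y)).const_mul σ).sub
        ((hφ'' y).const_mul 10000))
      (by
        have := hend (-R) (by rw [abs_neg, abs_of_pos hR0])
        have := hφ0 (-R)
        linarith)
      (by
        have := hend R (abs_of_pos hR0)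
        have := hφ0 R
        linarith)
      (by
        intro y hy hpos
        obtain ⟨a1, a2⟩ := hw y
        obtain ⟨hV0, hVe⟩ := hV y
        obtain ⟨hW0, hWe⟩ := hW y
        have b1 := hVW y
        set c := 2 * (w y ^ 2 + w y * W y + W y ^ 2) + y with hc
        have hcV : 6 * V y ^ 2 + y ≤ c := by
          have g1 : V y ^ 2 ≤ w y ^ 2 := by gcongr
          have g2 : V y ^ 2 ≤ W y ^ 2 := by gcongr
          have g3 : V y * V y ≤ w y * W y := by gcongr; linarith
          rw [hc]; nlinarith
        have hc1 := (hV.one_half_le hβ1 y).trans hcV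
        have hc2 := (hV.abs_le hβ1 y).trans hcV
        have hcur := abs_curvature_le hα hW hc1 hc2
        set S := W y ^ 3 * (2 * α - 4 * W y ^ 3) / (4 * W y ^ 3 + α) ^ 3
        have hS : σ * S ≤ c / 4 * (10000 * φ y) := by
          refine (le_abs_self _).trans ?_
          rwa [abs_mul, hσ1, one_mul]
        have hb := (le_abs_self _).trans (hφb y)
        have hφy := hφ0 y
        have e : 2 * w y ^ 3 + y * w y - α - S = c * (w y - W y) - S := by
          rw [hc]; linear_combination hWe
        rw [e]
        have hb' : φ'' y ≤ c / 4 * φ y := hb.trans (by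
          change φ y / 8 ≤ _
          nlinarith)
        have hcφ : 0 < c * φ y := by positivity
        have hm : c * (10000 * φ y + ε) < c * (σ * (w y - W y)) := by
          gcongr; linarith
        have hcε : 0 < c * ε := by positivity
        nlinarith) x (abs_le.1 hxR)
    linarith
  change |w x - W x| ≤ 10000 * φ x
  rw [abs_le]
  constructor
  · have := key (-1) (by norm_num); linarith
  · have := key 1 (by norm_num); linarith

/-! ### Asymptotic expansions -/

lemma abs_curve_sub_le_right {α : ℝ} (hα : 0 ≤ α) {W : ℝ → ℝ} (hW : IsRootCurve α W) {x : ℝ}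
    (hx : 1 < x) : |W x - α / x| ≤ 2 * α ^ 3 * x ^ (-(5 : ℝ) / 2) := by
  obtain ⟨hW0, hWe⟩ := hW x
  have hx0 : 0 < x := by linarith
  have h1 : W x ≤ α / x := by rw [le_div_iff₀ hx0]; nlinarith [pow_pos hW0 3]
  have h2 : α / x - W x = 2 * W x ^ 3 / x := by field_simp; linarith
  rw [abs_sub_comm, h2, abs_of_pos (by positivity)]
  calc 2 * W x ^ 3 / x ≤ 2 * (α / x) ^ 3 / x := by gcongr
    _ = 2 * α ^ 3 * x ^ (-(4 : ℝ)) := by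
      rw [Real.rpow_neg hx0.le]; norm_cast; field_simp
    _ ≤ _ := by
      gcongr
      · exact hx.le
      · norm_num

lemma abs_curve_sub_le_left {α : ℝ} (hα : 0 ≤ α) {W : ℝ → ℝ} (hW : IsRootCurve α W) {x : ℝ}
    (hx : x < -1) : |W x - Real.sqrt (-x / 2) + α / (2 * x)| ≤ α ^ 2 * (-x) ^ (-(5 : ℝ) / 2) := by
  obtain ⟨hW0, hWe⟩ := hW x
  have hx0 : 0 < -x := by linarith
  set s := Real.sqrt (-x / 2) with hs
  have hs0 : 0 < s := Real.sqrt_pos.2 (by linarith)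
  have hs2 : s ^ 2 = -x / 2 := Real.sq_sqrt (by linarith)
  have hxs : x = -2 * s ^ 2 := by linarith
  set a := W x with ha
  -- with `x = -2 s²` the cubic factors
  have hprod : 2 * a * (a + s) * (a - s) = α := by rw [← hWe, hxs]; ring
  have has : s ≤ a := by
    by_contra! h
    have : 0 < 2 * a * (a + s) := by positivity
    nlinarith
  have h1 : 4 * s ^ 2 * (a - s) ≤ α := by
    rw [← hprod]
    have : 0 ≤ a - s := by linarith
    have : 4 * s ^ 2 ≤ 2 * a * (a + s) := by nlinarith
    gcongr
  -- the second-order defect of the expansion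
  have h2 : a - s + α / (2 * x) = -((a - s) ^ 2 * (a + 2 * s) / (2 * s ^ 2)) := by
    rw [hxs, ← hprod]; field_simp; ring
  have h3 : (a - s) * (a + 2 * s) * s ≤ α := by
    have : 0 ≤ a - s := by linarith
    rw [← hprod]
    have : (a + 2 * s) * s ≤ 2 * a * (a + s) := by nlinarith
    nlinarith
  have h4 : (a - s) ^ 2 * (a + 2 * s) / (2 * s ^ 2) ≤ α ^ 2 / (8 * s ^ 5) := by
    rw [div_le_div_iff₀ (by positivity) (by positivity)]
    have : 0 ≤ a - s := by linarith
    calc (a - s) ^ 2 * (a + 2 * s) * (8 * s ^ 5)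
        = (4 * s ^ 2 * (a - s)) * ((a - s) * (a + 2 * s) * s) * (2 * s ^ 2) := by ring
      _ ≤ α * α * (2 * s ^ 2) := by gcongr
      _ = _ := by ring
  rw [h2, abs_neg, abs_of_nonneg (by positivity)]
  refine h4.trans ?_
  set T := (-x) ^ ((5 : ℝ) / 2) with hT
  have hT0 : 0 < T := Real.rpow_pos_of_pos hx0 _
  have hT2 : T ^ 2 = (-x) ^ 5 := by
    rw [hT, ← Real.rpow_natCast, ← Real.rpow_mul hx0.le, ← Real.rpow_natCast]; norm_num
  have hTs : T ≤ 8 * s ^ 5 := by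
    refine le_of_sq_le_sq ?_ (by positivity)
    rw [hT2, hxs]
    nlinarith [pow_pos hs0 10]
  rw [neg_div, Real.rpow_neg hx0.le, ← hT, ← div_eq_mul_inv]
  gcongr

lemma rpow_comparison_le {x y : ℝ} (hx : 0 < x) (h : y ^ 2 = x ^ 2) :
    (100 + y ^ 2) ^ (-(5 : ℝ) / 4) ≤ x ^ (-(5 : ℝ) / 2) := by
  have e : x ^ (-(5 : ℝ) / 2) = (x ^ 2) ^ (-(5 : ℝ) / 4) := by
    rw [← Real.rpow_natCast_mul hx.le]; norm_num
  rw [e, h]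
  exact Real.rpow_le_rpow_of_nonpos (by positivity) (by linarith) (by norm_num)

/-- The asymptotic expansions of a solution that stays close to the root curve of level `α`,
in terms of the positive function `w = -u`. -/
lemma asymptotics {α : ℝ} (hα : 0 ≤ α) {W w : ℝ → ℝ} (hW : IsRootCurve α W)
    (hw : ∀ x, |w x - W x| ≤ 10000 * (100 + x ^ 2) ^ (-(5 : ℝ) / 4)) :
    (∀ x : ℝ, 1 < x →
      |w x - α / x| ≤ (10000 + 2 * α ^ 3 + α ^ 2) * x ^ (-(5 : ℝ) / 2)) ∧
    (∀ x : ℝ, x < -1 → |w x - Real.sqrt (-x / 2) + α / (2 * x)|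
      ≤ (10000 + 2 * α ^ 3 + α ^ 2) * (-x) ^ (-(5 : ℝ) / 2)) := by
  refine ⟨fun x hx => ?_, fun x hx => ?_⟩
  · have hx0 : 0 < x := by linarith
    have h1 := hw x
    have h2 := abs_curve_sub_le_right hα hW hx
    have h3 := rpow_comparison_le hx0 (rfl : x ^ 2 = x ^ 2)
    have h4 : 0 < x ^ (-(5 : ℝ) / 2) := Real.rpow_pos_of_pos hx0 _
    have h5 : 0 ≤ α ^ 2 * x ^ (-(5 : ℝ) / 2) := by positivity
    have h6 := _root_.abs_sub_le (w x) (W x) (α / x)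
    linarith
  · have hx0 : 0 < -x := by linarith
    have h1 := hw x
    have h2 := abs_curve_sub_le_left hα hW hx
    have h3 := rpow_comparison_le hx0 (neg_sq x).symm
    have h4 : 0 < (-x) ^ (-(5 : ℝ) / 2) := Real.rpow_pos_of_pos hx0 _
    have h5 : 0 ≤ 2 * α ^ 3 * (-x) ^ (-(5 : ℝ) / 2) := by positivity
    have h6 := abs_add_le (w x - W x) (W x - Real.sqrt (-x / 2) + α / (2 * x))
    rw [show w x - W x + (W x - Real.sqrt (-x / 2) + α / (2 * x))
      = w x - Real.sqrt (-x / 2) + α / (2 * x) by ring] at h6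
    linarith

/-! ### Analyticity -/

section

open scoped ContDiff Nat

/-- Leibniz rule for factorial bounds: since `i! = (i choose j) j! (i - j)!`, all `i + 1` terms of
the `i`-th derivative of a product obey the same bound, and a product costs one factor `i + 1`. -/
lemma abs_iteratedDeriv_mul_le {f g : ℝ → ℝ} (hf : ContDiff ℝ ∞ f) (hg : ContDiff ℝ ∞ g)
    {A B ρ x : ℝ} {p n : ℕ} (hA : 0 ≤ A) (hB : 0 ≤ B) (hρ : 0 ≤ ρ)
    (h1 : ∀ i ≤ n, |iteratedDeriv i f x| ≤ i ! * (A * ρ ^ i))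
    (h2 : ∀ i ≤ n, |iteratedDeriv i g x| ≤ i ! * (B * (i + 1) ^ p * ρ ^ i)) :
    ∀ i ≤ n, |iteratedDeriv i (fun y => f y * g y) x|
      ≤ i ! * (A * B * (i + 1) ^ (p + 1) * ρ ^ i) := by
  intro i hi
  rw [iteratedDeriv_fun_mul (hf.contDiffAt.of_le (mod_cast le_top))
    (hg.contDiffAt.of_le (mod_cast le_top))]
  refine (Finset.abs_sum_le_sum_abs _ _).trans ?_
  have key : ∀ j ∈ Finset.range (i + 1),
      |(i.choose j : ℝ) * iteratedDeriv j f x * iteratedDeriv (i - j) g x|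
        ≤ i ! * (A * B * (i + 1) ^ p * ρ ^ i) := by
    intro j hj
    have hji : j ≤ i := by simpa [Nat.lt_succ_iff] using hj
    have e1 : (i ! : ℝ) = i.choose j * j ! * (i - j)! := by
      exact_mod_cast (Nat.choose_mul_factorial_mul_factorial hji).symm
    have e2 : ρ ^ i = ρ ^ j * ρ ^ (i - j) := by rw [← pow_add]; congr 1; omega
    have e3 : (((i - j : ℕ) : ℝ) + 1) ^ p ≤ (i + 1) ^ p := by
      gcongr; exact Nat.sub_le i j
    have a1 := h1 j (hji.trans hi)
    have a2 := h2 (i - j) ((Nat.sub_le i j).trans hi)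
    rw [abs_mul, abs_mul, Nat.abs_cast]
    calc (i.choose j : ℝ) * |iteratedDeriv j f x| * |iteratedDeriv (i - j) g x|
        ≤ i.choose j * (j ! * (A * ρ ^ j)) * ((i - j)! * (B * (i + 1) ^ p * ρ ^ (i - j))) := by
          refine mul_le_mul (by gcongr) (a2.trans (by gcongr)) (abs_nonneg _) (by positivity)
      _ = _ := by rw [e1, e2]; ring
  refine (Finset.sum_le_sum key).trans (le_of_eq ?_)
  rw [Finset.sum_const, Finset.card_range, nsmul_eq_mul]
  push_cast
  ring

/-- Cauchy-type derivative bounds on a neighbourhood make the Taylor series converge to the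
function, by the Lagrange form of the remainder. -/
lemma analyticAt_of_abs_iteratedDeriv_le {f : ℝ → ℝ} (hf : ContDiff ℝ ∞ f) {x₀ C ρ : ℝ}
    (hρ : 0 < ρ)
    (h : ∀ n : ℕ, ∀ x ∈ Icc (x₀ - 1) (x₀ + 1), |iteratedDeriv n f x| ≤ n ! * (C * ρ ^ n)) :
    AnalyticAt ℝ f x₀ := by
  refine ⟨FormalMultilinearSeries.ofScalars ℝ (fun n => iteratedDeriv n f x₀ / n !), ?_⟩
  rw [hasFPowerSeriesAt_iff]
  have hev : ∀ᶠ z : ℝ in 𝓝 0, |z| < min 1 (1 / (2 * ρ)) := by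
    have h0 : (0:ℝ) < min 1 (1 / (2 * ρ)) := by positivity
    have : Tendsto (fun z : ℝ => |z|) (𝓝 0) (𝓝 |0|) := (continuous_abs.tendsto 0)
    rw [abs_zero] at this
    exact this.eventually_lt_const h0
  filter_upwards [hev] with z hz
  have hz1 : |z| < 1 := hz.trans_le (min_le_left _ _)
  have hz2 : ρ * |z| < 1 := by
    have := hz.trans_le (min_le_right _ _)
    rw [lt_div_iff₀ (by positivity)] at this
    nlinarith [abs_nonneg z]
  have hq : Summable fun n : ℕ => C * (ρ * |z|) ^ n :=
    (summable_geometric_of_lt_one (by positivity) hz2).mul_left C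
  simp only [FormalMultilinearSeries.coeff_ofScalars, smul_eq_mul]
  have hb : ∀ n : ℕ, ‖z ^ n * (iteratedDeriv n f x₀ / n !)‖ ≤ C * (ρ * |z|) ^ n := by
    intro n
    have := h n x₀ ⟨by linarith, by linarith⟩
    rw [Real.norm_eq_abs, abs_mul, abs_div, abs_pow, Nat.abs_cast, mul_pow]
    have h3 : |iteratedDeriv n f x₀| / n ! ≤ C * ρ ^ n := by
      rw [div_le_iff₀ (by positivity)]; linarith
    calc _ ≤ |z| ^ n * (C * ρ ^ n) := by gcongr
      _ = _ := by ring
  have hs : Summable fun n : ℕ => ‖z ^ n * (iteratedDeriv n f x₀ / n !)‖ :=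
    Summable.of_nonneg_of_le (fun _ => norm_nonneg _) hb hq
  rw [hasSum_iff_tendsto_nat_of_summable_norm hs, ← tendsto_add_atTop_iff_nat 1]
  rcases eq_or_ne z 0 with rfl | hz0
  · refine tendsto_const_nhds.congr fun n => ?_
    rw [Finset.sum_range_succ']
    simp
  have hne : x₀ ≠ x₀ + z := by simpa using hz0
  rw [tendsto_iff_dist_tendsto_zero]
  have hlim : Tendsto (fun n : ℕ => C * (ρ * |z|) ^ (n + 1)) atTop (𝓝 0) := by
    exact hq.tendsto_atTop_zero.comp (tendsto_add_atTop_nat 1)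
  refine squeeze_zero (fun _ => dist_nonneg) (fun n => ?_) hlim
  obtain ⟨y, hy, hye⟩ := taylor_mean_remainder_lagrange_iteratedDeriv (n := n) hne
    (hf.contDiffOn.of_le (mod_cast le_top))
  have hyI : y ∈ Icc (x₀ - 1) (x₀ + 1) := by
    have h4 : y ∈ uIcc x₀ (x₀ + z) := uIoo_subset_uIcc_self hy
    have h5 := abs_sub_left_of_mem_uIcc h4
    rw [add_sub_cancel_left] at h5
    have := abs_le.1 (h5.trans hz1.le)
    constructor <;> linarith [this.1, this.2]
  have hT : taylorWithinEval f n (uIcc x₀ (x₀ + z)) x₀ (x₀ + z)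
      = ∑ k ∈ Finset.range (n + 1), z ^ k * (iteratedDeriv k f x₀ / k !) := by
    rw [taylor_within_apply]
    refine Finset.sum_congr rfl fun k _ => ?_
    rw [iteratedDerivWithin_eq_iteratedDeriv (uniqueDiffOn_uIcc hne)
      (hf.contDiffAt.of_le (mod_cast le_top)) left_mem_uIcc]
    simp only [add_sub_cancel_left, smul_eq_mul]
    ring
  rw [dist_comm, Real.dist_eq, ← hT, hye, add_sub_cancel_left, abs_div, abs_mul, abs_pow,
    Nat.abs_cast, div_le_iff₀ (by positivity)]
  have := mul_le_mul_of_nonneg_right (h (n + 1) y hyI) (pow_nonneg (abs_nonneg z) (n + 1))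
  rw [mul_pow]
  linarith

lemma contDiff_of_painleve {α : ℝ} {w w' : ℝ → ℝ} (h1 : ∀ x, HasDerivAt w (w' x) x)
    (h2 : ∀ x, HasDerivAt w' (2 * w x ^ 3 + x * w x - α) x) : ContDiff ℝ ∞ w := by
  have d1 : deriv w = w' := funext fun x => (h1 x).deriv
  have d2 : deriv w' = fun x => 2 * w x ^ 3 + x * w x - α := funext fun x => (h2 x).deriv
  rw [contDiff_infty]
  have key : ∀ n : ℕ, ContDiff ℝ n w ∧ ContDiff ℝ n w' := by
    intro n
    induction n with
    | zero =>
      simp only [Nat.cast_zero, contDiff_zero]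
      exact ⟨continuous_iff_continuousAt.2 fun x => (h1 x).continuousAt,
        continuous_iff_continuousAt.2 fun x => (h2 x).continuousAt⟩
    | succ n ih =>
      obtain ⟨i1, i2⟩ := ih
      push_cast
      rw [contDiff_succ_iff_deriv, contDiff_succ_iff_deriv, d1, d2]
      exact ⟨⟨fun x => (h1 x).differentiableAt, by simp, i2⟩,
        ⟨fun x => (h2 x).differentiableAt, by simp, by fun_prop⟩⟩
  exact fun n => (key n).1

/-- Twice differentiable solutions of the Painlevé equation are real-analytic: the bound
`|w⁽ⁿ⁾| ≤ n! C ρⁿ` on `[x₀ - 1, x₀ + 1]` follows by strong induction. The cubic term loses only a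
factor `(n + 1)²`, which is absorbed because `(n + 2)! / n! ≥ (n + 1)²`. -/
lemma analyticAt_of_painleve {α : ℝ} {w w' : ℝ → ℝ} (h1 : ∀ x, HasDerivAt w (w' x) x)
    (h2 : ∀ x, HasDerivAt w' (2 * w x ^ 3 + x * w x - α) x) (x₀ : ℝ) : AnalyticAt ℝ w x₀ := by
  have hw := contDiff_of_painleve h1 h2
  have d1 : deriv w = w' := funext fun x => (h1 x).deriv
  have d2 : deriv w' = fun x => 2 * w x ^ 3 + x * w x - α := funext fun x => (h2 x).deriv
  have hc : Continuous w := hw.continuous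
  have hc' : Continuous w' := continuous_iff_continuousAt.2 fun x => (h2 x).continuousAt
  obtain ⟨C₁, hC₁⟩ := isCompact_Icc.exists_bound_of_continuousOn
    (hc.continuousOn (s := Icc (x₀ - 1) (x₀ + 1)))
  obtain ⟨C₂, hC₂⟩ := isCompact_Icc.exists_bound_of_continuousOn
    (hc'.continuousOn (s := Icc (x₀ - 1) (x₀ + 1)))
  set C := max 1 (max C₁ C₂) with hCdef
  have hC1 : 1 ≤ C := le_max_left _ _
  have hC0 : 0 < C := by linarith
  set R := |x₀| + 1 with hR
  have hR1 : 1 ≤ R := by simp [hR]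
  -- large enough for `2 C³ + R C + |α| ≤ C ρ²`, which closes the induction
  set ρ := 2 * C ^ 2 + R + |α| + 1 with hρ
  have hρ1 : 1 ≤ ρ := by have := abs_nonneg α; have := sq_nonneg C; linarith
  refine analyticAt_of_abs_iteratedDeriv_le hw (C := C) (by linarith : 0 < ρ) fun n x hx => ?_
  have hxR : |x| ≤ R := by
    rw [hR]
    have : |x - x₀| ≤ 1 := abs_le.2 ⟨by linarith [hx.1], by linarith [hx.2]⟩
    linarith [abs_sub_abs_le_abs_sub x x₀]
  have hid : ∀ i : ℕ, |iteratedDeriv i (fun y : ℝ => y) x| ≤ i ! * (R * ρ ^ i) := by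
    intro i
    rw [iteratedDeriv_fun_id]
    have h3 : 1 ≤ ρ ^ i := one_le_pow₀ hρ1
    have h4 : (1:ℝ) ≤ i ! := by exact_mod_cast Nat.factorial_pos i
    have h5 : R ≤ i ! * (R * ρ ^ i) := by
      have : 1 * (R * 1) ≤ i ! * (R * ρ ^ i) := by gcongr
      linarith
    split_ifs
    · exact hxR.trans h5
    · rw [abs_one]; exact hR1.trans h5
    · rw [abs_zero]; linarith
  have hcst : ∀ i : ℕ, |iteratedDeriv i (fun _ : ℝ => α) x| ≤ i ! * (|α| * ρ ^ i) := by
    intro i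
    rw [iteratedDeriv_const]
    split_ifs with hi
    · simp [hi]
    · rw [abs_zero]; positivity
  induction n using Nat.strong_induction_on with
  | _ n ih =>
    match n, ih with
    | 0, _ =>
      simp only [iteratedDeriv_zero, Nat.factorial_zero, Nat.cast_one, pow_zero, mul_one, one_mul]
      exact (hC₁ x hx).trans ((le_max_left _ _).trans (le_max_right _ _))
    | 1, _ =>
      simp only [iteratedDeriv_one, d1, Nat.factorial_one, Nat.cast_one, pow_one, one_mul]
      have := (hC₂ x hx).trans ((le_max_right C₁ C₂).trans (le_max_right 1 _))
      rw [Real.norm_eq_abs] at this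
      nlinarith
    | (n + 2), ih =>
      have hb : ∀ i ≤ n, |iteratedDeriv i w x| ≤ i ! * (C * ρ ^ i) := fun i hi => ih i (by omega)
      have hb' : ∀ i ≤ n, |iteratedDeriv i w x| ≤ i ! * (C * (i + 1) ^ 0 * ρ ^ i) := by
        simpa using hb
      have hρ0 : 0 ≤ ρ := by linarith
      have hsq := abs_iteratedDeriv_mul_le hw hw hC0.le hC0.le hρ0 hb hb'
      have hcu := abs_iteratedDeriv_mul_le hw (hw.mul hw) hC0.le (by positivity) hρ0 hb hsq n le_rfl
      have hli := abs_iteratedDeriv_mul_le contDiff_id hw (by linarith : 0 ≤ R) hC0.le hρ0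
        (fun i _ => hid i) hb' n le_rfl
      have hco := hcst n
      simp only [id, zero_add, pow_one] at hcu hli
      have e1 : iteratedDeriv (n + 2) w x
          = 2 * iteratedDeriv n (fun y => w y * (w y * w y)) x
            + iteratedDeriv n (fun y => y * w y) x - iteratedDeriv n (fun _ => α) x := by
        have c1 : ContDiffAt ℝ n w x := hw.contDiffAt.of_le (mod_cast le_top)
        rw [iteratedDeriv_succ', iteratedDeriv_succ', d1, d2]
        have : (fun x => 2 * w x ^ 3 + x * w x - α)
            = fun y => (2 * (w y * (w y * w y)) + y * w y) - α := by
          funext y; ring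
        rw [this, iteratedDeriv_fun_sub (by fun_prop) (by fun_prop),
          iteratedDeriv_fun_add (by fun_prop) (by fun_prop), iteratedDeriv_const_mul_field]
      rw [e1]
      have e2 : ((n + 2)! : ℝ) = (n + 2) * (n + 1) * n ! := by
        rw [Nat.factorial_succ, Nat.factorial_succ]; push_cast; ring
      have hn1 : (1:ℝ) ≤ n + 1 := by linarith [(Nat.cast_nonneg n : (0:ℝ) ≤ n)]
      have hP : 0 ≤ (n ! : ℝ) * ρ ^ n := by positivity
      have b1 : |2 * iteratedDeriv n (fun y => w y * (w y * w y)) x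
            + iteratedDeriv n (fun y => y * w y) x - iteratedDeriv n (fun _ => α) x|
          ≤ (n ! * ρ ^ n) * (2 * C ^ 3 * (n + 1) ^ 2 + R * C * (n + 1) + |α|) := by
        obtain ⟨p1, p2⟩ := abs_le.1 hcu
        obtain ⟨q1, q2⟩ := abs_le.1 hli
        obtain ⟨r1, r2⟩ := abs_le.1 hco
        have e : (n ! * ρ ^ n) * (2 * C ^ 3 * ((n : ℝ) + 1) ^ 2 + R * C * (n + 1) + |α|)
            = 2 * (n ! * (C * (C * C) * ((n : ℝ) + 1) ^ (1 + 1) * ρ ^ n))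
              + n ! * (R * C * ((n : ℝ) + 1) * ρ ^ n) + n ! * (|α| * ρ ^ n) := by ring
        rw [e, abs_le]
        constructor <;> linarith
      refine b1.trans ?_
      have b2 : 2 * C ^ 3 * ((n:ℝ) + 1) ^ 2 + R * C * (n + 1) + |α|
          ≤ (n + 2) * (n + 1) * (C * ρ ^ 2) := by
        have hα := abs_nonneg α
        have hS : (n : ℝ) + 1 ≤ (n + 1) ^ 2 := le_self_pow₀ hn1 two_ne_zero
        have t1 : R * C * ((n:ℝ) + 1) ≤ R * C * (n + 1) ^ 2 := by gcongr
        have t2 : |α| * 1 ≤ |α| * (C * ((n:ℝ) + 1) ^ 2) := by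
          gcongr
          exact one_le_mul_of_one_le_of_one_le hC1 (hn1.trans hS)
        have t3 : (2 * C ^ 2 + R + |α|) ≤ ρ ^ 2 :=
          le_trans (by linarith) (le_self_pow₀ hρ1 two_ne_zero)
        have t4 : ((n:ℝ) + 1) ^ 2 ≤ (n + 2) * (n + 1) := by rw [sq]; gcongr; norm_num
        have e : ((n:ℝ) + 1) ^ 2 * (C * (2 * C ^ 2 + R + |α|))
            = 2 * C ^ 3 * ((n:ℝ) + 1) ^ 2 + R * C * (n + 1) ^ 2
              + |α| * (C * ((n:ℝ) + 1) ^ 2) := by ring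
        calc _ ≤ ((n:ℝ) + 1) ^ 2 * (C * (2 * C ^ 2 + R + |α|)) := by linarith
          _ ≤ _ := by gcongr
      calc _ ≤ (n ! * ρ ^ n) * ((n + 2) * (n + 1) * (C * ρ ^ 2)) := by gcongr
        _ = _ := by rw [e2]; ring

end

end HastingsMcLeod

/-- for every `ν ∈ ℕ = {0,1,2,...}` the Hastings–McLeod solution of the
inhomogeneous Painlevé II equation `u'' = 2u³ + xu + ν + 1/2` is pole free on the real axis:
there is a real-analytic `u : ℝ → ℝ` defined on all of `ℝ`, solving the equation everywhere,
with `u(x) = -(ν+1/2)/x + O(x^{-5/2})` as `x → +∞` and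
`u(x) = -√(-x/2) + (ν+1/2)/(2x) + O((-x)^{-5/2})` as `x → -∞`. -/
theorem hastingsMcLeod_nat_pole_free (ν : ℕ) :
    ∃ u : ℝ → ℝ,
      AnalyticOnNhd ℝ u Set.univ ∧
      (∀ x : ℝ, deriv (deriv u) x = 2 * u x ^ 3 + x * u x + ν + 1 / 2) ∧
      ∃ M : ℝ, 0 < M ∧ ∃ C : ℝ, 0 < C ∧
        (∀ x : ℝ, M < x → |u x + (ν + 1 / 2) / x| ≤ C * x ^ (-(5 : ℝ) / 2)) ∧
        (∀ x : ℝ, x < -M →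
          |u x + Real.sqrt (-x / 2) - (ν + 1 / 2) / (2 * x)| ≤ C * (-x) ^ (-(5 : ℝ) / 2)) := by
  set α : ℝ := ν + 1 / 2 with hαdef
  have hα : 1 / 2 ≤ α := by linarith [(Nat.cast_nonneg ν : (0 : ℝ) ≤ ν)]
  obtain ⟨V, hV⟩ := HastingsMcLeod.exists_isRootCurve (show 0 < α / 2 by linarith)
  obtain ⟨W, hW⟩ := HastingsMcLeod.exists_isRootCurve (show 0 < α by linarith)
  obtain ⟨U, hU⟩ := HastingsMcLeod.exists_isRootCurve (show 0 < 2 * α by linarith)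
  obtain ⟨w, w', h1, h2, hVU⟩ := HastingsMcLeod.exists_solution hα hV hU
  obtain ⟨hr, hl⟩ := HastingsMcLeod.asymptotics (by linarith) hW
    (HastingsMcLeod.abs_sub_le hα hV hW hU h1 h2 hVU)
  refine ⟨fun x => -w x, fun x _ => (HastingsMcLeod.analyticAt_of_painleve h1 h2 x).neg,
    fun x => ?_, 1, one_pos, 10000 + 2 * α ^ 3 + α ^ 2, by positivity, fun x hx => ?_, fun x hx => ?_⟩
  · have d : deriv (fun x => -w x) = fun x => -w' x := funext fun y => (h1 y).fun_neg.deriv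
    rw [d, (h2 x).fun_neg.deriv, hαdef]
    ring
  · rw [← abs_neg]
    convert hr x hx using 2
    ring
  · rw [← abs_neg]
    convert hl x hx using 2
    ring
end
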